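/- arXiv:2104.04589 — 9 statements merged into one kernel-verified Lean document; each statement's English description precedes it below -/
import Mathlib

section
/- In system PRK the generalized absurdity rule is admissible: for any finite set Γ of moded propositions and any moded propositions P and Q, where P is not necessarily strong, if Γ ⊢ P and Γ ⊢ P~ are derivable then Γ ⊢ Q is derivable. -/
/-- Pure propositions: A ::= α | A∧B | A∨B | ¬A -/
inductive PureProp : Type
  | var : ℕ → PureProp
  | conj : PureProp → PureProp → PureProp
  | disj : PureProp → PureProp → PureProp
  | neg : PureProp → PureProp
  deriving DecidableEq

/-- Moded propositions: A⁺ (sp), A⁻ (sn), A⊕ (cp), A⊖ (cn). -/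
inductive MProp : Type
  | sp : PureProp → MProp
  | sn : PureProp → MProp
  | cp : PureProp → MProp
  | cn : PureProp → MProp
  deriving DecidableEq

/-- The opposite P~: flips the sign, keeps the strength. -/
def MProp.opp : MProp → MProp
  | .sp A => .sn A
  | .sn A => .sp A
  | .cp A => .cn A
  | .cn A => .cp A

def MProp.isStrong : MProp → Prop
  | .sp _ => True
  | .sn _ => True
  | .cp _ => False
  | .cn _ => False

def MProp.isClassical : MProp → Prop
  | .sp _ => False
  | .sn _ => False
  | .cp _ => True
  | .cn _ => True

/-- Derivability in system PRK (natural deduction), Γ a finite set of moded propositions. -/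
inductive PRK : Finset MProp → MProp → Prop
  | ax {Γ : Finset MProp} {P : MProp} : P ∈ Γ → PRK Γ P
  | abs {Γ : Finset MProp} {P Q : MProp} :
      P.isStrong → PRK Γ P → PRK Γ P.opp → PRK Γ Q
  | iConjP {Γ A B} : PRK Γ (MProp.cp A) → PRK Γ (MProp.cp B) → PRK Γ (MProp.sp (PureProp.conj A B))
  | eConjP1 {Γ A B} : PRK Γ (MProp.sp (PureProp.conj A B)) → PRK Γ (MProp.cp A)
  | eConjP2 {Γ A B} : PRK Γ (MProp.sp (PureProp.conj A B)) → PRK Γ (MProp.cp B)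
  | iDisjP1 {Γ A B} : PRK Γ (MProp.cp A) → PRK Γ (MProp.sp (PureProp.disj A B))
  | iDisjP2 {Γ A B} : PRK Γ (MProp.cp B) → PRK Γ (MProp.sp (PureProp.disj A B))
  | eDisjP {Γ A B P} : PRK Γ (MProp.sp (PureProp.disj A B)) →
      PRK (insert (MProp.cp A) Γ) P → PRK (insert (MProp.cp B) Γ) P → PRK Γ P
  | iNegP {Γ A} : PRK Γ (MProp.cn A) → PRK Γ (MProp.sp (PureProp.neg A))
  | eNegP {Γ A} : PRK Γ (MProp.sp (PureProp.neg A)) → PRK Γ (MProp.cn A)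
  | icP {Γ A} : PRK (insert (MProp.cn A) Γ) (MProp.sp A) → PRK Γ (MProp.cp A)
  | ecP {Γ A} : PRK Γ (MProp.cp A) → PRK Γ (MProp.cn A) → PRK Γ (MProp.sp A)
  | iDisjN {Γ A B} : PRK Γ (MProp.cn A) → PRK Γ (MProp.cn B) → PRK Γ (MProp.sn (PureProp.disj A B))
  | eDisjN1 {Γ A B} : PRK Γ (MProp.sn (PureProp.disj A B)) → PRK Γ (MProp.cn A)
  | eDisjN2 {Γ A B} : PRK Γ (MProp.sn (PureProp.disj A B)) → PRK Γ (MProp.cn B)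
  | iConjN1 {Γ A B} : PRK Γ (MProp.cn A) → PRK Γ (MProp.sn (PureProp.conj A B))
  | iConjN2 {Γ A B} : PRK Γ (MProp.cn B) → PRK Γ (MProp.sn (PureProp.conj A B))
  | eConjN {Γ A B P} : PRK Γ (MProp.sn (PureProp.conj A B)) →
      PRK (insert (MProp.cn A) Γ) P → PRK (insert (MProp.cn B) Γ) P → PRK Γ P
  | iNegN {Γ A} : PRK Γ (MProp.cp A) → PRK Γ (MProp.sn (PureProp.neg A))
  | eNegN {Γ A} : PRK Γ (MProp.sn (PureProp.neg A)) → PRK Γ (MProp.cp A)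
  | icN {Γ A} : PRK (insert (MProp.cp A) Γ) (MProp.sn A) → PRK Γ (MProp.cn A)
  | ecN {Γ A} : PRK Γ (MProp.cn A) → PRK Γ (MProp.cp A) → PRK Γ (MProp.sn A)

namespace PRK

variable {Γ : Finset MProp} {A : PureProp} {Q : MProp}

theorem of_sp_of_sn (hp : PRK Γ (.sp A)) (hn : PRK Γ (.sn A)) : PRK Γ Q :=
  .abs (P := .sp A) trivial hp hn

theorem of_cp_of_cn (hp : PRK Γ (.cp A)) (hn : PRK Γ (.cn A)) : PRK Γ Q :=
  of_sp_of_sn (.ecP hp hn) (.ecN hn hp)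

end PRK

/-- Generalized absurdity is admissible in PRK. -/
theorem generalized_absurdity (Γ : Finset MProp) (P Q : MProp)
    (h1 : PRK Γ P) (h2 : PRK Γ P.opp) : PRK Γ Q := by
  cases P with
  | sp A => exact .of_sp_of_sn h1 h2
  | sn A => exact .of_sp_of_sn h2 h1
  | cp A => exact .of_cp_of_cn h1 h2
  | cn A => exact .of_cp_of_cn h2 h1
end

section
/- In system PRK the contraposition rule is admissible: if P is a classical moded proposition (of the form A⊕ or A⊖) and Γ,P ⊢ Q is derivable, then Γ,Q~ ⊢ P~ is derivable. -/
namespace PRK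

variable {Γ Δ : Finset MProp} {P Q R : MProp}

theorem mono (hΓΔ : Γ ⊆ Δ) (h : PRK Γ P) : PRK Δ P := by
  induction h generalizing Δ with
  | ax hP => exact .ax (hΓΔ hP)
  | abs hP _ _ ih ih_opp => exact .abs hP (ih hΓΔ) (ih_opp hΓΔ)
  | iConjP _ _ ihA ihB => exact .iConjP (ihA hΓΔ) (ihB hΓΔ)
  | eConjP1 _ ih => exact .eConjP1 (ih hΓΔ)
  | eConjP2 _ ih => exact .eConjP2 (ih hΓΔ)
  | iDisjP1 _ ih => exact .iDisjP1 (ih hΓΔ)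
  | iDisjP2 _ ih => exact .iDisjP2 (ih hΓΔ)
  | eDisjP _ _ _ ih ihA ihB =>
    exact .eDisjP (ih hΓΔ) (ihA (Finset.insert_subset_insert _ hΓΔ))
      (ihB (Finset.insert_subset_insert _ hΓΔ))
  | iNegP _ ih => exact .iNegP (ih hΓΔ)
  | eNegP _ ih => exact .eNegP (ih hΓΔ)
  | icP _ ih => exact .icP (ih (Finset.insert_subset_insert _ hΓΔ))
  | ecP _ _ ih ih_opp => exact .ecP (ih hΓΔ) (ih_opp hΓΔ)
  | iDisjN _ _ ihA ihB => exact .iDisjN (ihA hΓΔ) (ihB hΓΔ)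
  | eDisjN1 _ ih => exact .eDisjN1 (ih hΓΔ)
  | eDisjN2 _ ih => exact .eDisjN2 (ih hΓΔ)
  | iConjN1 _ ih => exact .iConjN1 (ih hΓΔ)
  | iConjN2 _ ih => exact .iConjN2 (ih hΓΔ)
  | eConjN _ _ _ ih ihA ihB =>
    exact .eConjN (ih hΓΔ) (ihA (Finset.insert_subset_insert _ hΓΔ))
      (ihB (Finset.insert_subset_insert _ hΓΔ))
  | iNegN _ ih => exact .iNegN (ih hΓΔ)
  | eNegN _ ih => exact .eNegN (ih hΓΔ)
  | icN _ ih => exact .icN (ih (Finset.insert_subset_insert _ hΓΔ))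
  | ecN _ _ ih ih_opp => exact .ecN (ih hΓΔ) (ih_opp hΓΔ)

theorem explosion (h : PRK Γ Q) (hopp : PRK Γ Q.opp) : PRK Γ R := by
  cases Q with
  | sp A => exact .abs (P := .sp A) trivial h hopp
  | sn A => exact .abs (P := .sn A) trivial h hopp
  | cp A => exact .abs (P := .sp A) trivial (.ecP h hopp) (.ecN hopp h)
  | cn A => exact .abs (P := .sn A) trivial (.ecN h hopp) (.ecP hopp h)

theorem opp_of_contradiction (hP : P.isClassical) (h : PRK (insert P Γ) Q)
    (hopp : PRK (insert P Γ) Q.opp) : PRK Γ P.opp := by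
  cases P with
  | sp _ | sn _ => exact hP.elim
  | cp _ => exact .icN (h.explosion hopp)
  | cn _ => exact .icP (h.explosion hopp)

end PRK

/-- Contraposition is admissible in PRK for classical P. -/
theorem contraposition (Γ : Finset MProp) (P Q : MProp)
    (hP : P.isClassical) (h : PRK (insert P Γ) Q) :
    PRK (insert Q.opp Γ) P.opp := by
  have hQ : PRK (insert P (insert Q.opp Γ)) Q :=
    h.mono (Finset.insert_subset_insert P (Finset.subset_insert Q.opp Γ))
  have hQopp : PRK (insert P (insert Q.opp Γ)) Q.opp :=
    .ax (Finset.mem_insert_of_mem (Finset.mem_insert_self Q.opp Γ))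
  exact PRK.opp_of_contradiction hP hQ hQopp
end

section
/- Projection Lemma for PRK: if Γ,P ⊢ Q is derivable in PRK, then Γ,⌊P⌋ ⊢ ⌊Q⌋ is derivable in PRK, where ⌊·⌋ is the classical projection. -/
/-- The classical projection ⌊·⌋: keeps the sign, makes the strength classical. -/
def MProp.trunc : MProp → MProp
  | .sp A => .cp A
  | .sn A => .cn A
  | .cp A => .cp A
  | .cn A => .cn A

namespace MProp

theorem opp_opp (P : MProp) : P.opp.opp = P := by
  cases P <;> rfl

theorem trunc_opp (P : MProp) : P.opp.trunc = P.trunc.opp := by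
  cases P <;> rfl

theorem isClassical_trunc (P : MProp) : P.trunc.isClassical := by
  cases P <;> trivial

theorem isClassical.opp {P : MProp} (hP : P.isClassical) : P.opp.isClassical := by
  cases P <;> exact hP

end MProp

namespace PRK

variable {Γ Δ : Finset MProp} {P Q R : MProp}

theorem weaken (h : PRK Γ Q) (hs : Γ ⊆ Δ) : PRK Δ Q := by
  induction h generalizing Δ with
  | ax hQ => exact .ax (hs hQ)
  | abs hP _ _ ih₁ ih₂ => exact .abs hP (ih₁ hs) (ih₂ hs)
  | iConjP _ _ ih₁ ih₂ => exact .iConjP (ih₁ hs) (ih₂ hs)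
  | eConjP1 _ ih => exact .eConjP1 (ih hs)
  | eConjP2 _ ih => exact .eConjP2 (ih hs)
  | iDisjP1 _ ih => exact .iDisjP1 (ih hs)
  | iDisjP2 _ ih => exact .iDisjP2 (ih hs)
  | eDisjP _ _ _ ih ih₁ ih₂ =>
    exact .eDisjP (ih hs) (ih₁ (Finset.insert_subset_insert _ hs))
      (ih₂ (Finset.insert_subset_insert _ hs))
  | iNegP _ ih => exact .iNegP (ih hs)
  | eNegP _ ih => exact .eNegP (ih hs)
  | icP _ ih => exact .icP (ih (Finset.insert_subset_insert _ hs))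
  | ecP _ _ ih₁ ih₂ => exact .ecP (ih₁ hs) (ih₂ hs)
  | iDisjN _ _ ih₁ ih₂ => exact .iDisjN (ih₁ hs) (ih₂ hs)
  | eDisjN1 _ ih => exact .eDisjN1 (ih hs)
  | eDisjN2 _ ih => exact .eDisjN2 (ih hs)
  | iConjN1 _ ih => exact .iConjN1 (ih hs)
  | iConjN2 _ ih => exact .iConjN2 (ih hs)
  | eConjN _ _ _ ih ih₁ ih₂ =>
    exact .eConjN (ih hs) (ih₁ (Finset.insert_subset_insert _ hs))
      (ih₂ (Finset.insert_subset_insert _ hs))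
  | iNegN _ ih => exact .iNegN (ih hs)
  | eNegN _ ih => exact .eNegN (ih hs)
  | icN _ ih => exact .icN (ih (Finset.insert_subset_insert _ hs))
  | ecN _ _ ih₁ ih₂ => exact .ecN (ih₁ hs) (ih₂ hs)

theorem weaken_insert (h : PRK Γ Q) : PRK (insert R Γ) Q :=
  h.weaken (Finset.subset_insert R Γ)

theorem ax_insert : PRK (insert P Γ) P :=
  .ax (Finset.mem_insert_self P Γ)

theorem trunc (h : PRK Γ Q) : PRK Γ Q.trunc := by
  cases Q with
  | sp A => exact .icP h.weaken_insert
  | sn A => exact .icN h.weaken_insert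
  | cp A => exact h
  | cn A => exact h

theorem contradiction (h : PRK Γ P) (h' : PRK Γ P.opp) : PRK Γ Q := by
  cases P with
  | sp A => exact .abs (P := .sp A) trivial h h'
  | sn A => exact .abs (P := .sn A) trivial h h'
  | cp A => exact .abs (P := .sp A) trivial (.ecP h h') (.ecN h' h)
  | cn A => exact .abs (P := .sn A) trivial (.ecN h h') (.ecP h' h)

theorem reductio (hP : P.isClassical) (h : PRK (insert P.opp Γ) P) : PRK Γ P := by
  cases P with
  | sp A => exact hP.elim
  | sn A => exact hP.elim
  | cp A => exact .icP (h.contradiction ax_insert)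
  | cn A => exact .icN (h.contradiction ax_insert)

theorem contrapose (hP : P.isClassical) (h : PRK (insert P Γ) Q) :
    PRK (insert Q.opp Γ) P.opp := by
  refine reductio hP.opp ?_
  rw [P.opp_opp]
  have hQ : PRK (insert P (insert Q.opp Γ)) Q :=
    h.weaken (Finset.insert_subset_insert P (Finset.subset_insert Q.opp Γ))
  exact hQ.contradiction ax_insert.weaken_insert

/-- The form in which elimination rules survive projection: the dual introduction rule supplies
`h`. -/
theorem trunc_of_trunc_of_opp (hR : PRK Γ R.trunc) (h : PRK (insert Q.trunc.opp Γ) R.opp) :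
    PRK Γ Q.trunc := by
  have hR' : PRK (insert Q.trunc.opp Γ) R.trunc.opp := R.trunc_opp ▸ h.trunc
  exact reductio Q.isClassical_trunc (hR.weaken_insert.contradiction hR')

theorem forall_mem_insert_trunc (hΔ : ∀ S ∈ Δ, PRK Γ S.trunc) :
    ∀ S ∈ insert R Δ, PRK (insert R Γ) S.trunc :=
  (Finset.forall_mem_insert ..).2 ⟨ax_insert.trunc, fun S hS => (hΔ S hS).weaken_insert⟩

theorem trunc_of_forall_trunc (h : PRK Δ Q) (hΔ : ∀ R ∈ Δ, PRK Γ R.trunc) : PRK Γ Q.trunc := by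
  induction h generalizing Γ with
  | ax hQ => exact hΔ _ hQ
  | @abs _ P _ _ _ _ ih₁ ih₂ => exact (ih₁ hΔ).contradiction (P.trunc_opp ▸ ih₂ hΔ)
  | iConjP _ _ ih₁ ih₂ => exact (iConjP (ih₁ hΔ) (ih₂ hΔ)).trunc
  | eConjP1 _ ih => exact trunc_of_trunc_of_opp (ih hΔ) (iConjN1 ax_insert)
  | eConjP2 _ ih => exact trunc_of_trunc_of_opp (ih hΔ) (iConjN2 ax_insert)
  | iDisjP1 _ ih => exact (iDisjP1 (ih hΔ)).trunc
  | iDisjP2 _ ih => exact (iDisjP2 (ih hΔ)).trunc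
  | @eDisjP _ A B Q _ _ _ ih ih₁ ih₂ =>
    have hA : PRK (insert Q.trunc.opp Γ) (.cn A) :=
      contrapose (P := .cp A) trivial (ih₁ (forall_mem_insert_trunc hΔ))
    have hB : PRK (insert Q.trunc.opp Γ) (.cn B) :=
      contrapose (P := .cp B) trivial (ih₂ (forall_mem_insert_trunc hΔ))
    exact trunc_of_trunc_of_opp (ih hΔ) (iDisjN hA hB)
  | iNegP _ ih => exact (iNegP (ih hΔ)).trunc
  | eNegP _ ih => exact trunc_of_trunc_of_opp (ih hΔ) (iNegN ax_insert)
  | icP _ ih => exact reductio trivial (ih (forall_mem_insert_trunc hΔ))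
  | ecP _ _ ih₁ _ => exact ih₁ hΔ
  | iDisjN _ _ ih₁ ih₂ => exact (iDisjN (ih₁ hΔ) (ih₂ hΔ)).trunc
  | eDisjN1 _ ih => exact trunc_of_trunc_of_opp (ih hΔ) (iDisjP1 ax_insert)
  | eDisjN2 _ ih => exact trunc_of_trunc_of_opp (ih hΔ) (iDisjP2 ax_insert)
  | iConjN1 _ ih => exact (iConjN1 (ih hΔ)).trunc
  | iConjN2 _ ih => exact (iConjN2 (ih hΔ)).trunc
  | @eConjN _ A B Q _ _ _ ih ih₁ ih₂ =>
    have hA : PRK (insert Q.trunc.opp Γ) (.cp A) :=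
      contrapose (P := .cn A) trivial (ih₁ (forall_mem_insert_trunc hΔ))
    have hB : PRK (insert Q.trunc.opp Γ) (.cp B) :=
      contrapose (P := .cn B) trivial (ih₂ (forall_mem_insert_trunc hΔ))
    exact trunc_of_trunc_of_opp (ih hΔ) (iConjP hA hB)
  | iNegN _ ih => exact (iNegN (ih hΔ)).trunc
  | eNegN _ ih => exact trunc_of_trunc_of_opp (ih hΔ) (iNegP ax_insert)
  | icN _ ih => exact reductio trivial (ih (forall_mem_insert_trunc hΔ))
  | ecN _ _ ih₁ _ => exact ih₁ hΔ

end PRK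

/-- Projection lemma for PRK. -/
theorem projection_lemma (Γ : Finset MProp) (P Q : MProp)
    (h : PRK (insert P Γ) Q) : PRK (insert P.trunc Γ) Q.trunc := by
  refine h.trunc_of_forall_trunc ((Finset.forall_mem_insert ..).2 ⟨.ax_insert, fun R hR => ?_⟩)
  have hR' : PRK (insert P.trunc Γ) R := .ax (Finset.mem_insert_of_mem hR)
  exact hR'.trunc
end

section
/- Duality principle for PRK: if P₁,…,Pₙ ⊢ Q is derivable in PRK, then P₁^⊥,…,Pₙ^⊥ ⊢ Q^⊥ is derivable in PRK, where (·)^⊥ is the duality operation on moded propositions. -/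
/-- The dual of a pure proposition. -/
def PureProp.dual : PureProp → PureProp
  | .var a => .var a
  | .conj A B => .disj A.dual B.dual
  | .disj A B => .conj A.dual B.dual
  | .neg A => .neg A.dual

/-- The dual of a moded proposition. -/
def MProp.dual : MProp → MProp
  | .sp A => .sn A.dual
  | .sn A => .sp A.dual
  | .cp A => .cn A.dual
  | .cn A => .cp A.dual

theorem MProp.dual_opp : ∀ P : MProp, P.opp.dual = P.dual.opp
  | .sp _ | .sn _ | .cp _ | .cn _ => rfl

theorem MProp.isStrong.dual : ∀ {P : MProp}, P.isStrong → P.dual.isStrong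
  | .sp _, _ | .sn _, _ => trivial

theorem PRK.insert_image {f : MProp → MProp} {Γ : Finset MProp} {P Q : MProp}
    (h : PRK ((insert P Γ).image f) Q) : PRK (insert (f P) (Γ.image f)) Q :=
  Finset.image_insert f P Γ ▸ h

/-- Duality principle for PRK. -/
theorem duality_principle (Γ : Finset MProp) (Q : MProp)
    (h : PRK Γ Q) : PRK (Γ.image MProp.dual) Q.dual := by
  induction h with
  | ax hP => exact .ax (Finset.mem_image_of_mem _ hP)
  | abs hP _ _ ih ihOpp => exact .abs hP.dual ih (MProp.dual_opp _ ▸ ihOpp)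
  | iConjP _ _ ihA ihB => exact .iDisjN ihA ihB
  | iDisjN _ _ ihA ihB => exact .iConjP ihA ihB
  | eConjP1 _ ih => exact .eDisjN1 ih
  | eDisjN1 _ ih => exact .eConjP1 ih
  | eConjP2 _ ih => exact .eDisjN2 ih
  | eDisjN2 _ ih => exact .eConjP2 ih
  | iDisjP1 _ ih => exact .iConjN1 ih
  | iConjN1 _ ih => exact .iDisjP1 ih
  | iDisjP2 _ ih => exact .iConjN2 ih
  | iConjN2 _ ih => exact .iDisjP2 ih
  | eDisjP _ _ _ ih ihA ihB => exact .eConjN ih ihA.insert_image ihB.insert_image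
  | eConjN _ _ _ ih ihA ihB => exact .eDisjP ih ihA.insert_image ihB.insert_image
  | iNegP _ ih => exact .iNegN ih
  | iNegN _ ih => exact .iNegP ih
  | eNegP _ ih => exact .eNegN ih
  | eNegN _ ih => exact .eNegP ih
  | icP _ ih => exact .icN ih.insert_image
  | icN _ ih => exact .icP ih.insert_image
  | ecP _ _ ih ihOpp => exact .ecN ih ihOpp
  | ecN _ _ ih ihOpp => exact .ecP ih ihOpp
end

section
/- Stabilization of forcing: in any Kripke model for PRK, for every world w and every moded proposition P, there exists a world w' ≥ w such that either w' ⊩ P or w' ⊩ P~, but not both. -/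
/-- A Kripke model for PRK. -/
structure KripkeModel (W : Type) where
  le : W → W → Prop
  le_refl : ∀ w, le w w
  le_trans : ∀ {a b c}, le a b → le b c → le a c
  le_antisymm : ∀ {a b}, le a b → le b a → a = b
  Vp : W → ℕ → Prop
  Vn : W → ℕ → Prop
  monoP : ∀ {w w'}, le w w' → ∀ {a}, Vp w a → Vp w' a
  monoN : ∀ {w w'}, le w w' → ∀ {a}, Vn w a → Vn w' a
  stab : ∀ w a, ∃ w', le w w' ∧ Xor' (Vp w' a) (Vn w' a)

def PureProp.size : PureProp → ℕ
  | .var _ => 1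
  | .conj A B => 1 + A.size + B.size
  | .disj A B => 1 + A.size + B.size
  | .neg A => 1 + A.size

def MProp.meas : MProp → ℕ
  | .sp A => 2 * A.size
  | .sn A => 2 * A.size
  | .cp A => 2 * A.size + 1
  | .cn A => 2 * A.size + 1

/-- The forcing relation w ⊩ P, defined by recursion on the measure. -/
def Forces {W : Type} (M : KripkeModel W) : W → MProp → Prop
  | w, .sp (.var a) => M.Vp w a
  | w, .sn (.var a) => M.Vn w a
  | w, .sp (.conj A B) => Forces M w (.cp A) ∧ Forces M w (.cp B)
  | w, .sn (.conj A B) => Forces M w (.cn A) ∨ Forces M w (.cn B)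
  | w, .sp (.disj A B) => Forces M w (.cp A) ∨ Forces M w (.cp B)
  | w, .sn (.disj A B) => Forces M w (.cn A) ∧ Forces M w (.cn B)
  | w, .sp (.neg A) => Forces M w (.cn A)
  | w, .sn (.neg A) => Forces M w (.cp A)
  | w, .cp A => ∀ w', M.le w w' → ¬ Forces M w' (.sn A)
  | w, .cn A => ∀ w', M.le w w' → ¬ Forces M w' (.sp A)
termination_by w P => P.meas
decreasing_by all_goals simp [MProp.meas, PureProp.size] <;> omega

open scoped symmDiff

section Cofinal

variable {α : Type*} {s t s' t' : Set α}

theorem symmDiff_inter_symmDiff_subset :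
    (s ∆ t) ∩ (s' ∆ t') ⊆ (s ∩ s') ∆ (t ∪ t') := by
  rintro a ⟨⟨hs, ht⟩ | ⟨ht, hs⟩, ⟨hs', ht'⟩ | ⟨ht', hs'⟩⟩
  · exact .inl ⟨⟨hs, hs'⟩, not_or.2 ⟨ht, ht'⟩⟩
  · exact .inr ⟨.inr ht', fun h => hs' h.2⟩
  all_goals exact .inr ⟨.inl ht, fun h => hs h.1⟩

variable [Preorder α]

theorem isCofinal_inter_of_isUpperSet (hs : IsCofinal s) (hsu : IsUpperSet s) (ht : IsCofinal t) :
    IsCofinal (s ∩ t) := by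
  intro a
  obtain ⟨b, hbs, hab⟩ := hs a
  obtain ⟨c, hct, hbc⟩ := ht b
  exact ⟨c, ⟨hsu hbc hbs, hct⟩, hab.trans hbc⟩

theorem disjoint_of_isCofinal_symmDiff (hs : IsUpperSet s) (ht : IsUpperSet t)
    (h : IsCofinal (s ∆ t)) : Disjoint s t := by
  refine Set.disjoint_left.2 fun a has hat => ?_
  obtain ⟨b, ⟨-, hbt⟩ | ⟨-, hbs⟩, hab⟩ := h a
  · exact hbt (ht hab hat)
  · exact hbs (hs hab has)

theorem isUpperSet_symmDiff_of_disjoint (hs : IsUpperSet s) (ht : IsUpperSet t)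
    (h : Disjoint s t) : IsUpperSet (s ∆ t) := by
  rw [h.symmDiff_eq_sup]
  exact hs.union ht

theorem symmDiff_subset_symmDiff_lowerClosure (hs : IsUpperSet s) (ht : IsUpperSet t)
    (h : Disjoint s t) : s ∆ t ⊆ (lowerClosure s : Set α) ∆ (lowerClosure t : Set α) := by
  have hst : Disjoint s (lowerClosure t : Set α) := hs.disjoint_lowerClosure_right.2 h
  have hts : Disjoint t (lowerClosure s : Set α) := ht.disjoint_lowerClosure_right.2 h.symm
  rintro a (⟨has, -⟩ | ⟨hat, -⟩)
  · exact .inl ⟨subset_lowerClosure has, hst.notMem_of_mem_left has⟩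
  · exact .inr ⟨subset_lowerClosure hat, hts.notMem_of_mem_left hat⟩

theorem isCofinal_symmDiff_compl_lowerClosure (hs : IsUpperSet s) (ht : IsUpperSet t)
    (h : IsCofinal (s ∆ t)) :
    IsCofinal ((lowerClosure t : Set α)ᶜ ∆ (lowerClosure s : Set α)ᶜ) := by
  rw [compl_symmDiff_compl, symmDiff_comm]
  exact h.mono <| symmDiff_subset_symmDiff_lowerClosure hs ht <|
    disjoint_of_isCofinal_symmDiff hs ht h

theorem isCofinal_symmDiff_inter_union (hs : IsUpperSet s) (ht : IsUpperSet t)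
    (h : IsCofinal (s ∆ t)) (h' : IsCofinal (s' ∆ t')) :
    IsCofinal ((s ∩ s') ∆ (t ∪ t')) := by
  have hu : IsUpperSet (s ∆ t) :=
    isUpperSet_symmDiff_of_disjoint hs ht (disjoint_of_isCofinal_symmDiff hs ht h)
  exact (isCofinal_inter_of_isUpperSet h hu h').mono symmDiff_inter_symmDiff_subset

theorem isCofinal_symmDiff_union_inter (hs : IsUpperSet s) (ht : IsUpperSet t)
    (h : IsCofinal (s ∆ t)) (h' : IsCofinal (s' ∆ t')) :
    IsCofinal ((s ∪ s') ∆ (t ∩ t')) := by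
  rw [symmDiff_comm] at h h' ⊢
  exact isCofinal_symmDiff_inter_union ht hs h h'

end Cofinal

namespace KripkeModel

variable {W : Type}

/-- The worlds of `M`: a copy of `W` that remembers `M`, so that it can carry the order of `M` as an
instance. The equations of `Forces` rewrite only at points typed in `W`, hence `ext (w : W)` and
`change` in the computation of truth sets. -/
def World (_ : KripkeModel W) : Type := W

instance (M : KripkeModel W) : PartialOrder M.World where
  le := M.le
  le_refl := M.le_refl
  le_trans _ _ _ := M.le_trans
  le_antisymm _ _ := M.le_antisymm

variable (M : KripkeModel W) (A B : PureProp)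

/-- The truth set `⟦P⟧` of a moded proposition: the set of worlds forcing it. -/
def truthSet (P : MProp) : Set M.World := {w | Forces M w P}

theorem truthSet_sp_var (a : ℕ) : M.truthSet (.sp (.var a)) = {w | M.Vp w a} := by
  ext (w : W)
  change Forces M w _ ↔ M.Vp w a
  rw [Forces]

theorem truthSet_sn_var (a : ℕ) : M.truthSet (.sn (.var a)) = {w | M.Vn w a} := by
  ext (w : W)
  change Forces M w _ ↔ M.Vn w a
  rw [Forces]

theorem truthSet_sp_conj :
    M.truthSet (.sp (.conj A B)) = M.truthSet (.cp A) ∩ M.truthSet (.cp B) := by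
  ext (w : W)
  change Forces M w _ ↔ Forces M w _ ∧ Forces M w _
  rw [Forces]

theorem truthSet_sn_conj :
    M.truthSet (.sn (.conj A B)) = M.truthSet (.cn A) ∪ M.truthSet (.cn B) := by
  ext (w : W)
  change Forces M w _ ↔ Forces M w _ ∨ Forces M w _
  rw [Forces]

theorem truthSet_sp_disj :
    M.truthSet (.sp (.disj A B)) = M.truthSet (.cp A) ∪ M.truthSet (.cp B) := by
  ext (w : W)
  change Forces M w _ ↔ Forces M w _ ∨ Forces M w _
  rw [Forces]

theorem truthSet_sn_disj :
    M.truthSet (.sn (.disj A B)) = M.truthSet (.cn A) ∩ M.truthSet (.cn B) := by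
  ext (w : W)
  change Forces M w _ ↔ Forces M w _ ∧ Forces M w _
  rw [Forces]

theorem truthSet_sp_neg : M.truthSet (.sp (.neg A)) = M.truthSet (.cn A) := by
  ext (w : W)
  change Forces M w _ ↔ Forces M w _
  rw [Forces]

theorem truthSet_sn_neg : M.truthSet (.sn (.neg A)) = M.truthSet (.cp A) := by
  ext (w : W)
  change Forces M w _ ↔ Forces M w _
  rw [Forces]

theorem truthSet_cp : M.truthSet (.cp A) = (lowerClosure (M.truthSet (.sn A)) : Set M.World)ᶜ := by
  ext (w : W)
  change Forces M w _ ↔ ¬ ∃ w', Forces M w' _ ∧ M.le w w'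
  rw [Forces]
  simp only [not_exists, not_and']

theorem truthSet_cn : M.truthSet (.cn A) = (lowerClosure (M.truthSet (.sp A)) : Set M.World)ᶜ := by
  ext (w : W)
  change Forces M w _ ↔ ¬ ∃ w', Forces M w' _ ∧ M.le w w'
  rw [Forces]
  simp only [not_exists, not_and']

theorem isUpperSet_truthSet_cp : IsUpperSet (M.truthSet (.cp A)) := by
  rw [truthSet_cp]
  exact (lowerClosure _).lower.compl

theorem isUpperSet_truthSet_cn : IsUpperSet (M.truthSet (.cn A)) := by
  rw [truthSet_cn]
  exact (lowerClosure _).lower.compl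

theorem isUpperSet_truthSet_sp : IsUpperSet (M.truthSet (.sp A)) := by
  cases A with
  | var a =>
    rw [truthSet_sp_var]
    exact fun _ _ h => M.monoP h
  | conj A B =>
    rw [truthSet_sp_conj]
    exact (M.isUpperSet_truthSet_cp A).inter (M.isUpperSet_truthSet_cp B)
  | disj A B =>
    rw [truthSet_sp_disj]
    exact (M.isUpperSet_truthSet_cp A).union (M.isUpperSet_truthSet_cp B)
  | neg A =>
    rw [truthSet_sp_neg]
    exact M.isUpperSet_truthSet_cn A

theorem isUpperSet_truthSet_sn : IsUpperSet (M.truthSet (.sn A)) := by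
  cases A with
  | var a =>
    rw [truthSet_sn_var]
    exact fun _ _ h => M.monoN h
  | conj A B =>
    rw [truthSet_sn_conj]
    exact (M.isUpperSet_truthSet_cn A).union (M.isUpperSet_truthSet_cn B)
  | disj A B =>
    rw [truthSet_sn_disj]
    exact (M.isUpperSet_truthSet_cn A).inter (M.isUpperSet_truthSet_cn B)
  | neg A =>
    rw [truthSet_sn_neg]
    exact M.isUpperSet_truthSet_cp A

theorem isCofinal_symmDiff_truthSet_var (a : ℕ) :
    IsCofinal (M.truthSet (.sp (.var a)) ∆ M.truthSet (.sn (.var a))) := by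
  rw [truthSet_sp_var, truthSet_sn_var]
  intro w
  obtain ⟨w', hle, hxor⟩ := M.stab w a
  exact ⟨w', hxor, hle⟩

variable {A} in
theorem isCofinal_symmDiff_truthSet_classical
    (h : IsCofinal (M.truthSet (.sp A) ∆ M.truthSet (.sn A))) :
    IsCofinal (M.truthSet (.cp A) ∆ M.truthSet (.cn A)) := by
  rw [truthSet_cp, truthSet_cn]
  exact isCofinal_symmDiff_compl_lowerClosure (M.isUpperSet_truthSet_sp A)
    (M.isUpperSet_truthSet_sn A) h

theorem isCofinal_symmDiff_truthSet_strong :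
    IsCofinal (M.truthSet (.sp A) ∆ M.truthSet (.sn A)) := by
  induction A with
  | var a => exact M.isCofinal_symmDiff_truthSet_var a
  | conj A B ihA ihB =>
    rw [truthSet_sp_conj, truthSet_sn_conj]
    exact isCofinal_symmDiff_inter_union (M.isUpperSet_truthSet_cp A) (M.isUpperSet_truthSet_cn A)
      (M.isCofinal_symmDiff_truthSet_classical ihA) (M.isCofinal_symmDiff_truthSet_classical ihB)
  | disj A B ihA ihB =>
    rw [truthSet_sp_disj, truthSet_sn_disj]
    exact isCofinal_symmDiff_union_inter (M.isUpperSet_truthSet_cp A) (M.isUpperSet_truthSet_cn A)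
      (M.isCofinal_symmDiff_truthSet_classical ihA) (M.isCofinal_symmDiff_truthSet_classical ihB)
  | neg A ih =>
    rw [truthSet_sp_neg, truthSet_sn_neg, symmDiff_comm]
    exact M.isCofinal_symmDiff_truthSet_classical ih

theorem isCofinal_symmDiff_truthSet_opp (P : MProp) :
    IsCofinal (M.truthSet P ∆ M.truthSet P.opp) := by
  have strong := M.isCofinal_symmDiff_truthSet_strong
  cases P with
  | sp A => exact strong A
  | sn A => exact symmDiff_comm (M.truthSet (.sp A)) _ ▸ strong A
  | cp A => exact M.isCofinal_symmDiff_truthSet_classical (strong A)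
  | cn A =>
    exact symmDiff_comm (M.truthSet (.cp A)) _ ▸ M.isCofinal_symmDiff_truthSet_classical (strong A)

end KripkeModel

/-- Stabilization of forcing. -/
theorem forces_stabilization {W : Type} (M : KripkeModel W) (w : W) (P : MProp) :
    ∃ w', M.le w w' ∧ Xor' (Forces M w' P) (Forces M w' P.opp) := by
  obtain ⟨w', hxor, hle⟩ := M.isCofinal_symmDiff_truthSet_opp P w
  exact ⟨w', hle, hxor⟩
end

section
/- Non-contradiction of forcing: in any Kripke model for PRK, if w ⊩ P then it is not the case that w ⊩ P~. -/
/-- Intuitionistic negation in the Kripke semantics with accessibility relation `r`: the proposition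
`p` fails at every world accessible from `w`. -/
def KripkeNot {W : Type*} (r : W → W → Prop) (p : W → Prop) (w : W) : Prop :=
  ∀ w', r w w' → ¬ p w'

/-- The Monotonicity and Stabilization conditions on the affirmation and the denial of a variable in
a Kripke model for PRK, for arbitrary propositions `p` and `q` in their place. Stabilization is
encoded as incompatibility everywhere together with reachability of `p` or `q`, which under
Monotonicity is equivalent to reachability of exactly one of them. -/
structure Stabilizing {W : Type*} (r : W → W → Prop) (p q : W → Prop) : Prop where
  mono_left : ∀ ⦃w w'⦄, r w w' → p w → p w'
  mono_right : ∀ ⦃w w'⦄, r w w' → q w → q w'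
  not_right : ∀ ⦃w⦄, p w → ¬ q w
  exists_or : ∀ w, ∃ w', r w w' ∧ (p w' ∨ q w')

namespace Stabilizing

variable {W : Type*} {r : W → W → Prop} {p q p' q' : W → Prop}

theorem of_exists_xor (hp : ∀ ⦃w w'⦄, r w w' → p w → p w') (hq : ∀ ⦃w w'⦄, r w w' → q w → q w')
    (h : ∀ w, ∃ w', r w w' ∧ Xor (p w') (q w')) : Stabilizing r p q where
  mono_left := hp
  mono_right := hq
  not_right _ hpw hqw := by
    obtain ⟨w', hw, ⟨-, hq'⟩ | ⟨-, hp'⟩⟩ := h _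
    · exact hq' (hq hw hqw)
    · exact hp' (hp hw hpw)
  exists_or w := (h w).imp fun _ => And.imp_right Xor.or

theorem symm (h : Stabilizing r p q) : Stabilizing r q p where
  mono_left := h.mono_right
  mono_right := h.mono_left
  not_right _ hq hp := h.not_right hp hq
  exists_or w := (h.exists_or w).imp fun _ => And.imp_right Or.symm

theorem kripkeNot_of_left (h : Stabilizing r p q) {w : W} (hp : p w) : KripkeNot r q w :=
  fun _ hw => h.not_right (h.mono_left hw hp)

theorem kripkeNot [IsTrans W r] (h : Stabilizing r p q) :
    Stabilizing r (KripkeNot r q) (KripkeNot r p) where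
  mono_left _ _ hw hq u hu := hq u (_root_.trans hw hu)
  mono_right _ _ hw hp u hu := hp u (_root_.trans hw hu)
  not_right _ hq hp := by
    obtain ⟨w', hw, hp' | hq'⟩ := h.exists_or _
    · exact hp w' hw hp'
    · exact hq w' hw hq'
  exists_or w := (h.exists_or w).imp fun _ =>
    And.imp_right (Or.imp h.kripkeNot_of_left h.symm.kripkeNot_of_left)

theorem and_or [IsTrans W r] (h : Stabilizing r p q) (h' : Stabilizing r p' q') :
    Stabilizing r (fun w => p w ∧ p' w) (fun w => q w ∨ q' w) where
  mono_left _ _ hw := And.imp (h.mono_left hw) (h'.mono_left hw)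
  mono_right _ _ hw := Or.imp (h.mono_right hw) (h'.mono_right hw)
  not_right _ hp := not_or_intro (h.not_right hp.1) (h'.not_right hp.2)
  exists_or w := by
    obtain ⟨u, hu, hpq⟩ := h.exists_or w
    obtain ⟨v, hv, hpq'⟩ := h'.exists_or u
    refine ⟨v, _root_.trans hu hv, ?_⟩
    rcases hpq with hp | hq
    · exact hpq'.imp (And.intro (h.mono_left hv hp)) Or.inr
    · exact .inr (.inl (h.mono_right hv hq))

theorem or_and [IsTrans W r] (h : Stabilizing r p q) (h' : Stabilizing r p' q') :
    Stabilizing r (fun w => p w ∨ p' w) (fun w => q w ∧ q' w) :=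
  (h.symm.and_or h'.symm).symm

end Stabilizing

section Forcing

variable {W : Type} (M : KripkeModel W)

instance KripkeModel.isTrans_le : IsTrans W M.le := ⟨fun _ _ _ => M.le_trans⟩

theorem forces_cp_iff (w : W) (A : PureProp) :
    Forces M w (.cp A) ↔ KripkeNot M.le (Forces M · (.sn A)) w := by
  rw [Forces, KripkeNot]

theorem forces_cn_iff (w : W) (A : PureProp) :
    Forces M w (.cn A) ↔ KripkeNot M.le (Forces M · (.sp A)) w := by
  rw [Forces, KripkeNot]

variable {M} in
theorem Stabilizing.classical {A : PureProp}
    (h : Stabilizing M.le (Forces M · (.sp A)) (Forces M · (.sn A))) :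
    Stabilizing M.le (Forces M · (.cp A)) (Forces M · (.cn A)) := by
  simpa only [forces_cp_iff, forces_cn_iff] using h.kripkeNot

theorem stabilizing_forces_strong (A : PureProp) :
    Stabilizing M.le (Forces M · (.sp A)) (Forces M · (.sn A)) := by
  induction A with
  | var a =>
    simpa only [Forces] using
      .of_exists_xor (fun _ _ hw => M.monoP hw) (fun _ _ hw => M.monoN hw) (M.stab · a)
  | conj A B ihA ihB => simpa only [Forces] using ihA.classical.and_or ihB.classical
  | disj A B ihA ihB => simpa only [Forces] using ihA.classical.or_and ihB.classical
  | neg A ih => simpa only [Forces] using ih.classical.symm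

theorem stabilizing_forces_classical (A : PureProp) :
    Stabilizing M.le (Forces M · (.cp A)) (Forces M · (.cn A)) :=
  (stabilizing_forces_strong M A).classical

end Forcing

/-- Non-contradiction of forcing. -/
theorem forces_noncontradiction {W : Type} (M : KripkeModel W) (w : W) (P : MProp)
    (h : Forces M w P) : ¬ Forces M w P.opp := by
  cases P with
  | sp A => exact (stabilizing_forces_strong M A).not_right h
  | sn A => exact (stabilizing_forces_strong M A).symm.not_right h
  | cp A => exact (stabilizing_forces_classical M A).not_right h
  | cn A => exact (stabilizing_forces_classical M A).symm.not_right h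
end

section
/- Soundness of PRK with respect to Kripke semantics: if Γ ⊢ P is derivable in PRK, then in every Kripke model for PRK and every world w, if w ⊩ Q for every Q ∈ Γ, then w ⊩ P. -/
namespace KripkeModel

variable {W : Type} {M : KripkeModel W} {p q p' q' : W → Prop}

/-- Persistent predicates on worlds: those that stay true when moving up. -/
def Persistent (M : KripkeModel W) (p : W → Prop) : Prop :=
  ∀ ⦃w w'⦄, M.le w w' → p w → p w'

/-- Intuitionistic negation of a predicate on worlds. Classical modes are forced in this way:
`A⊕` is `Never` applied to `A⁻`, and `A⊖` is `Never` applied to `A⁺`. -/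
def Never (M : KripkeModel W) (p : W → Prop) (w : W) : Prop :=
  ∀ w', M.le w w' → ¬ p w'

/-- Complementary predicates on worlds: never true together, and above every world one of them
becomes true. For persistent predicates this is the stabilization condition, its "exactly one"
split into consistency at every world and decision above it. -/
structure Complementary (M : KripkeModel W) (p q : W → Prop) : Prop where
  disjoint : ∀ w, p w → ¬ q w
  cofinal : ∀ w, ∃ w', M.le w w' ∧ (p w' ∨ q w')

theorem Persistent.and (hp : M.Persistent p) (hq : M.Persistent q) :
    M.Persistent fun w => p w ∧ q w :=
  fun _ _ hle => And.imp (hp hle) (hq hle)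

theorem Persistent.or (hp : M.Persistent p) (hq : M.Persistent q) :
    M.Persistent fun w => p w ∨ q w :=
  fun _ _ hle => Or.imp (hp hle) (hq hle)

theorem persistent_never (p : W → Prop) : M.Persistent (M.Never p) :=
  fun _ _ hle h v hv => h v (M.le_trans hle hv)

theorem persistent_Vp (a : ℕ) : M.Persistent (M.Vp · a) :=
  fun _ _ hle => M.monoP hle

theorem persistent_Vn (a : ℕ) : M.Persistent (M.Vn · a) :=
  fun _ _ hle => M.monoN hle

namespace Complementary

theorem symm (h : M.Complementary p q) : M.Complementary q p where
  disjoint w hq hp := h.disjoint w hp hq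
  cofinal w := (h.cofinal w).imp fun _ ⟨hle, hpq⟩ => ⟨hle, hpq.symm⟩

theorem never_of_left (h : M.Complementary p q) (hp : M.Persistent p) {w : W} (hw : p w) :
    M.Never q w :=
  fun v hv => h.disjoint v (hp hv hw)

theorem never (h : M.Complementary p q) (hp : M.Persistent p) (hq : M.Persistent q) :
    M.Complementary (M.Never q) (M.Never p) where
  disjoint w hnq hnp := by
    obtain ⟨v, hv, hpv | hqv⟩ := h.cofinal w
    · exact hnp v hv hpv
    · exact hnq v hv hqv
  cofinal w := by
    obtain ⟨v, hv, hpq⟩ := h.cofinal w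
    exact ⟨v, hv, hpq.imp (h.never_of_left hp) (h.symm.never_of_left hq)⟩

theorem and_or (h : M.Complementary p q) (hp : M.Persistent p) (h' : M.Complementary p' q') :
    M.Complementary (fun w => p w ∧ p' w) (fun w => q w ∨ q' w) where
  disjoint w hpp' := not_or.2 ⟨h.disjoint w hpp'.1, h'.disjoint w hpp'.2⟩
  cofinal w := by
    obtain ⟨u, hu, hpu | hqu⟩ := h.cofinal w
    · obtain ⟨v, hv, hpv | hqv⟩ := h'.cofinal u
      · exact ⟨v, M.le_trans hu hv, .inl ⟨hp hv hpu, hpv⟩⟩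
      · exact ⟨v, M.le_trans hu hv, .inr (.inr hqv)⟩
    · exact ⟨u, hu, .inr (.inl hqu)⟩

end Complementary

theorem complementary_Vp_Vn (M : KripkeModel W) (a : ℕ) :
    M.Complementary (M.Vp · a) (M.Vn · a) where
  disjoint w hp hn := by
    obtain ⟨v, hv, ⟨_, hnv⟩ | ⟨_, hpv⟩⟩ := M.stab w a
    · exact hnv (M.monoN hv hn)
    · exact hpv (M.monoP hv hp)
  cofinal w := (M.stab w a).imp fun _ ⟨hv, hx⟩ => ⟨hv, Xor.or hx⟩

end KripkeModel

namespace Forces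

open KripkeModel

variable {W : Type} {M : KripkeModel W} {w : W} {a : ℕ} {A B : PureProp}

@[simp]
theorem sp_var : Forces M w (.sp (.var a)) ↔ M.Vp w a := by
  rw [Forces]

@[simp]
theorem sn_var : Forces M w (.sn (.var a)) ↔ M.Vn w a := by
  rw [Forces]

@[simp]
theorem sp_conj :
    Forces M w (.sp (.conj A B)) ↔ Forces M w (.cp A) ∧ Forces M w (.cp B) := by
  rw [Forces]

@[simp]
theorem sn_conj :
    Forces M w (.sn (.conj A B)) ↔ Forces M w (.cn A) ∨ Forces M w (.cn B) := by
  rw [Forces]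

@[simp]
theorem sp_disj :
    Forces M w (.sp (.disj A B)) ↔ Forces M w (.cp A) ∨ Forces M w (.cp B) := by
  rw [Forces]

@[simp]
theorem sn_disj :
    Forces M w (.sn (.disj A B)) ↔ Forces M w (.cn A) ∧ Forces M w (.cn B) := by
  rw [Forces]

@[simp]
theorem sp_neg : Forces M w (.sp (.neg A)) ↔ Forces M w (.cn A) := by
  rw [Forces]

@[simp]
theorem sn_neg : Forces M w (.sn (.neg A)) ↔ Forces M w (.cp A) := by
  rw [Forces]

theorem cp_iff_never_sn : Forces M w (.cp A) ↔ M.Never (Forces M · (.sn A)) w := by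
  rw [Forces, Never]

theorem cn_iff_never_sp : Forces M w (.cn A) ↔ M.Never (Forces M · (.sp A)) w := by
  rw [Forces, Never]

theorem persistent_cp (A : PureProp) : M.Persistent (Forces M · (.cp A)) := by
  simpa only [cp_iff_never_sn] using persistent_never _

theorem persistent_cn (A : PureProp) : M.Persistent (Forces M · (.cn A)) := by
  simpa only [cn_iff_never_sp] using persistent_never _

theorem persistent : ∀ P : MProp, M.Persistent (Forces M · P)
  | .cp A => persistent_cp A
  | .cn A => persistent_cn A
  | .sp (.var a) => by simpa only [sp_var] using persistent_Vp a
  | .sn (.var a) => by simpa only [sn_var] using persistent_Vn a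
  | .sp (.conj A B) => by simpa only [sp_conj] using (persistent_cp A).and (persistent_cp B)
  | .sn (.conj A B) => by simpa only [sn_conj] using (persistent_cn A).or (persistent_cn B)
  | .sp (.disj A B) => by simpa only [sp_disj] using (persistent_cp A).or (persistent_cp B)
  | .sn (.disj A B) => by simpa only [sn_disj] using (persistent_cn A).and (persistent_cn B)
  | .sp (.neg A) => by simpa only [sp_neg] using persistent_cn A
  | .sn (.neg A) => by simpa only [sn_neg] using persistent_cp A

theorem complementary_cp_cn (h : M.Complementary (Forces M · (.sp A)) (Forces M · (.sn A))) :
    M.Complementary (Forces M · (.cp A)) (Forces M · (.cn A)) := by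
  simpa only [cp_iff_never_sn, cn_iff_never_sp] using h.never (persistent _) (persistent _)

theorem complementary_sp_sn (M : KripkeModel W) (A : PureProp) :
    M.Complementary (Forces M · (.sp A)) (Forces M · (.sn A)) := by
  induction A with
  | var a => simpa only [sp_var, sn_var] using M.complementary_Vp_Vn a
  | conj A B ihA ihB =>
    simpa only [sp_conj, sn_conj] using
      (complementary_cp_cn ihA).and_or (persistent_cp A) (complementary_cp_cn ihB)
  | disj A B ihA ihB =>
    simpa only [sp_disj, sn_disj] using
      ((complementary_cp_cn ihA).symm.and_or (persistent_cn A) (complementary_cp_cn ihB).symm).symm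
  | neg A ih => simpa only [sp_neg, sn_neg] using (complementary_cp_cn ih).symm

theorem complementary_opp (M : KripkeModel W) :
    ∀ P : MProp, M.Complementary (Forces M · P) (Forces M · P.opp)
  | .sp A => complementary_sp_sn M A
  | .sn A => (complementary_sp_sn M A).symm
  | .cp A => complementary_cp_cn (complementary_sp_sn M A)
  | .cn A => (complementary_cp_cn (complementary_sp_sn M A)).symm

theorem not_opp {P : MProp} (h : Forces M w P) : ¬ Forces M w P.opp :=
  (complementary_opp M P).disjoint w h

theorem cp_of_sp (h : Forces M w (.sp A)) : Forces M w (.cp A) :=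
  cp_iff_never_sn.2 ((complementary_sp_sn M A).never_of_left (persistent _) h)

theorem cn_of_sn (h : Forces M w (.sn A)) : Forces M w (.cn A) :=
  cn_iff_never_sp.2 ((complementary_sp_sn M A).symm.never_of_left (persistent _) h)

theorem cp_of_forall_cn_imp_sp
    (h : ∀ v, M.le w v → Forces M v (.cn A) → Forces M v (.sp A)) : Forces M w (.cp A) :=
  cp_iff_never_sn.2 fun v hv hn => (h v hv hn.cn_of_sn).not_opp hn

theorem cn_of_forall_cp_imp_sn
    (h : ∀ v, M.le w v → Forces M v (.cp A) → Forces M v (.sn A)) : Forces M w (.cn A) :=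
  cn_iff_never_sp.2 fun v hv hp => (h v hv hp.cp_of_sp).not_opp hp

theorem forall_mem_insert {Γ : Finset MProp} {P : MProp} {v : W}
    (hΓ : ∀ Q ∈ Γ, Forces M w Q) (hle : M.le w v) (hP : Forces M v P) :
    ∀ Q ∈ insert P Γ, Forces M v Q :=
  (Finset.forall_mem_insert ..).2 ⟨hP, fun Q hQ => persistent Q hle (hΓ Q hQ)⟩

end Forces

open Forces

/-- Soundness of PRK with respect to Kripke semantics. -/
theorem prk_soundness {Γ : Finset MProp} {P : MProp} (h : PRK Γ P) :
    ∀ (W : Type) (M : KripkeModel W) (w : W),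
      (∀ Q ∈ Γ, Forces M w Q) → Forces M w P := by
  intro W M w hΓ
  induction h generalizing w with
  | ax hP => exact hΓ _ hP
  | abs _ _ _ ih ih' | ecP _ _ ih ih' | ecN _ _ ih ih' =>
    exact absurd (ih' w hΓ) (ih w hΓ).not_opp
  | icP _ ih => exact cp_of_forall_cn_imp_sp fun v hv h => ih v (forall_mem_insert hΓ hv h)
  | icN _ ih => exact cn_of_forall_cp_imp_sn fun v hv h => ih v (forall_mem_insert hΓ hv h)
  | iConjP _ _ ihA ihB | iDisjN _ _ ihA ihB => simp [ihA w hΓ, ihB w hΓ]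
  | iDisjP1 _ ih | iDisjP2 _ ih | iConjN1 _ ih | iConjN2 _ ih | iNegP _ ih | iNegN _ ih =>
    simp [ih w hΓ]
  | eConjP1 _ ih => exact (sp_conj.1 (ih w hΓ)).1
  | eConjP2 _ ih => exact (sp_conj.1 (ih w hΓ)).2
  | eDisjN1 _ ih => exact (sn_disj.1 (ih w hΓ)).1
  | eDisjN2 _ ih => exact (sn_disj.1 (ih w hΓ)).2
  | eNegP _ ih | eNegN _ ih => simpa using ih w hΓ
  | eDisjP _ _ _ ih ihA ihB =>
    obtain hA | hB := sp_disj.1 (ih w hΓ)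
    · exact ihA w (forall_mem_insert hΓ (M.le_refl w) hA)
    · exact ihB w (forall_mem_insert hΓ (M.le_refl w) hB)
  | eConjN _ _ _ ih ihA ihB =>
    obtain hA | hB := sn_conj.1 (ih w hΓ)
    · exact ihA w (forall_mem_insert hΓ (M.le_refl w) hA)
    · exact ihB w (forall_mem_insert hΓ (M.le_refl w) hB)
end

section
/- Subject reduction for λPRK: if Γ ⊢ t : P is derivable in the λPRK type system and t → s is a reduction step of λPRK, then Γ ⊢ s : P is derivable. -/
inductive Sign : Type | pos | neg
  deriving DecidableEq

def Sign.flip : Sign → Sign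
  | .pos => .neg
  | .neg => .pos

/-- Terms of λPRK, with de Bruijn indices for bound variables
    (a faithful rendering of terms modulo α-renaming). -/
inductive Tm : Type
  | var : ℕ → Tm
  | abs : MProp → Tm → Tm → Tm                    -- abs_P(t,s)
  | pair : Sign → Tm → Tm → Tm                    -- ⟨t,s⟩±
  | proj : Sign → Bool → Tm → Tm                  -- πᵢ±(t), i encoded by a Bool
  | inj : Sign → Bool → Tm → Tm                   -- inᵢ±(t)
  | case : Sign → Tm → MProp → Tm → MProp → Tm → Tm  -- case±(t, x:P.s, y:Q.u)
  | negi : Sign → Tm → Tm                         -- ¬i±(t)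
  | nege : Sign → Tm → Tm                         -- ¬e±(t)
  | lam : Sign → MProp → Tm → Tm                  -- λ±x:P.t
  | app : Sign → Tm → Tm → Tm                     -- t •± s
  deriving DecidableEq

/-- Shift free de Bruijn indices ≥ c up by d. -/
def Tm.shift (d : ℕ) : ℕ → Tm → Tm
  | c, .var k => if k < c then .var k else .var (k + d)
  | c, .abs P t s => .abs P (Tm.shift d c t) (Tm.shift d c s)
  | c, .pair sg t s => .pair sg (Tm.shift d c t) (Tm.shift d c s)
  | c, .proj sg i t => .proj sg i (Tm.shift d c t)
  | c, .inj sg i t => .inj sg i (Tm.shift d c t)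
  | c, .case sg t P s Q u =>
      .case sg (Tm.shift d c t) P (Tm.shift d (c+1) s) Q (Tm.shift d (c+1) u)
  | c, .negi sg t => .negi sg (Tm.shift d c t)
  | c, .nege sg t => .nege sg (Tm.shift d c t)
  | c, .lam sg P t => .lam sg P (Tm.shift d (c+1) t)
  | c, .app sg t s => .app sg (Tm.shift d c t) (Tm.shift d c s)

/-- Capture-avoiding substitution t[j := s]. -/
def Tm.subst : Tm → ℕ → Tm → Tm
  | .var k, j, s => if k = j then s else if j < k then .var (k - 1) else .var k
  | .abs P t u, j, s => .abs P (Tm.subst t j s) (Tm.subst u j s)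
  | .pair sg t u, j, s => .pair sg (Tm.subst t j s) (Tm.subst u j s)
  | .proj sg i t, j, s => .proj sg i (Tm.subst t j s)
  | .inj sg i t, j, s => .inj sg i (Tm.subst t j s)
  | .case sg t P u Q v, j, s =>
      .case sg (Tm.subst t j s) P (Tm.subst u (j+1) (Tm.shift 1 0 s)) Q (Tm.subst v (j+1) (Tm.shift 1 0 s))
  | .negi sg t, j, s => .negi sg (Tm.subst t j s)
  | .nege sg t, j, s => .nege sg (Tm.subst t j s)
  | .lam sg P t, j, s => .lam sg P (Tm.subst t (j+1) (Tm.shift 1 0 s))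
  | .app sg t u, j, s => .app sg (Tm.subst t j s) (Tm.subst u j s)

/-- abs'(t,s): for t of classical type of sign sg and s of the opposite classical type,
    abs'(t,s) = abs(t •sg s, s •(flip sg) t). -/
def absE (Q : MProp) (sg : Sign) (t s : Tm) : Tm :=
  Tm.abs Q (Tm.app sg t s) (Tm.app sg.flip s t)

/-- One-step reduction of λPRK, closed under arbitrary contexts. -/
inductive Red : Tm → Tm → Prop
  | proj1 {sg t1 t2} : Red (.proj sg false (.pair sg t1 t2)) t1
  | proj2 {sg t1 t2} : Red (.proj sg true (.pair sg t1 t2)) t2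
  | case1 {sg t P Q s1 s2} : Red (.case sg (.inj sg false t) P s1 Q s2) (Tm.subst s1 0 t)
  | case2 {sg t P Q s1 s2} : Red (.case sg (.inj sg true t) P s1 Q s2) (Tm.subst s2 0 t)
  | negRed {sg t} : Red (.nege sg (.negi sg t)) t
  | beta {sg P t s} : Red (.app sg (.lam sg P t) s) (Tm.subst t 0 s)
  | absPairInj1 {Q sg t1 t2 s} :
      Red (.abs Q (.pair sg t1 t2) (.inj sg.flip false s)) (absE Q sg t1 s)
  | absPairInj2 {Q sg t1 t2 s} :
      Red (.abs Q (.pair sg t1 t2) (.inj sg.flip true s)) (absE Q sg t2 s)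
  | absInjPair1 {Q sg t s1 s2} :
      Red (.abs Q (.inj sg false t) (.pair sg.flip s1 s2)) (absE Q sg t s1)
  | absInjPair2 {Q sg t s1 s2} :
      Red (.abs Q (.inj sg true t) (.pair sg.flip s1 s2)) (absE Q sg t s2)
  | absNeg {Q sg t s} :
      Red (.abs Q (.negi sg t) (.negi sg.flip s)) (absE Q sg.flip t s)
  | absCL {Q t t' s} : Red t t' → Red (.abs Q t s) (.abs Q t' s)
  | absCR {Q t s s'} : Red s s' → Red (.abs Q t s) (.abs Q t s')
  | pairCL {sg t t' s} : Red t t' → Red (.pair sg t s) (.pair sg t' s)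
  | pairCR {sg t s s'} : Red s s' → Red (.pair sg t s) (.pair sg t s')
  | projC {sg i t t'} : Red t t' → Red (.proj sg i t) (.proj sg i t')
  | injC {sg i t t'} : Red t t' → Red (.inj sg i t) (.inj sg i t')
  | caseC1 {sg t t' P s Q u} : Red t t' → Red (.case sg t P s Q u) (.case sg t' P s Q u)
  | caseC2 {sg t P s s' Q u} : Red s s' → Red (.case sg t P s Q u) (.case sg t P s' Q u)
  | caseC3 {sg t P s Q u u'} : Red u u' → Red (.case sg t P s Q u) (.case sg t P s Q u')
  | negiC {sg t t'} : Red t t' → Red (.negi sg t) (.negi sg t')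
  | negeC {sg t t'} : Red t t' → Red (.nege sg t) (.nege sg t')
  | lamC {sg P t t'} : Red t t' → Red (.lam sg P t) (.lam sg P t')
  | appCL {sg t t' s} : Red t t' → Red (.app sg t s) (.app sg t' s)
  | appCR {sg t s s'} : Red s s' → Red (.app sg t s) (.app sg t s')

/-- Zero-or-more-step reduction. -/
def RedStar : Tm → Tm → Prop := Relation.ReflTransGen Red

/-- The λPRK typing judgment Γ ⊢ t : P.  Contexts are lists (de Bruijn). -/
inductive TJ : List MProp → Tm → MProp → Prop
  | var {Γ : List MProp} {n P} : Γ[n]? = some P → TJ Γ (.var n) P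
  | absT {Γ t s P Q} : MProp.isStrong P → TJ Γ t P → TJ Γ s P.opp → TJ Γ (.abs Q t s) Q
  | pairP {Γ t s A B} : TJ Γ t (MProp.cp A) → TJ Γ s (MProp.cp B) →
      TJ Γ (.pair .pos t s) (MProp.sp (PureProp.conj A B))
  | pairN {Γ t s A B} : TJ Γ t (MProp.cn A) → TJ Γ s (MProp.cn B) →
      TJ Γ (.pair .neg t s) (MProp.sn (PureProp.disj A B))
  | projP1 {Γ t A B} : TJ Γ t (MProp.sp (PureProp.conj A B)) → TJ Γ (.proj .pos false t) (MProp.cp A)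
  | projP2 {Γ t A B} : TJ Γ t (MProp.sp (PureProp.conj A B)) → TJ Γ (.proj .pos true t) (MProp.cp B)
  | projN1 {Γ t A B} : TJ Γ t (MProp.sn (PureProp.disj A B)) → TJ Γ (.proj .neg false t) (MProp.cn A)
  | projN2 {Γ t A B} : TJ Γ t (MProp.sn (PureProp.disj A B)) → TJ Γ (.proj .neg true t) (MProp.cn B)
  | injP1 {Γ t A B} : TJ Γ t (MProp.cp A) → TJ Γ (.inj .pos false t) (MProp.sp (PureProp.disj A B))
  | injP2 {Γ t A B} : TJ Γ t (MProp.cp B) → TJ Γ (.inj .pos true t) (MProp.sp (PureProp.disj A B))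
  | injN1 {Γ t A B} : TJ Γ t (MProp.cn A) → TJ Γ (.inj .neg false t) (MProp.sn (PureProp.conj A B))
  | injN2 {Γ t A B} : TJ Γ t (MProp.cn B) → TJ Γ (.inj .neg true t) (MProp.sn (PureProp.conj A B))
  | caseP {Γ t s u A B P} : TJ Γ t (MProp.sp (PureProp.disj A B)) →
      TJ (MProp.cp A :: Γ) s P → TJ (MProp.cp B :: Γ) u P →
      TJ Γ (.case .pos t (MProp.cp A) s (MProp.cp B) u) P
  | caseN {Γ t s u A B P} : TJ Γ t (MProp.sn (PureProp.conj A B)) →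
      TJ (MProp.cn A :: Γ) s P → TJ (MProp.cn B :: Γ) u P →
      TJ Γ (.case .neg t (MProp.cn A) s (MProp.cn B) u) P
  | negiP {Γ t A} : TJ Γ t (MProp.cn A) → TJ Γ (.negi .pos t) (MProp.sp (PureProp.neg A))
  | negiN {Γ t A} : TJ Γ t (MProp.cp A) → TJ Γ (.negi .neg t) (MProp.sn (PureProp.neg A))
  | negeP {Γ t A} : TJ Γ t (MProp.sp (PureProp.neg A)) → TJ Γ (.nege .pos t) (MProp.cn A)
  | negeN {Γ t A} : TJ Γ t (MProp.sn (PureProp.neg A)) → TJ Γ (.nege .neg t) (MProp.cp A)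
  | lamP {Γ t A} : TJ (MProp.cn A :: Γ) t (MProp.sp A) → TJ Γ (.lam .pos (MProp.cn A) t) (MProp.cp A)
  | lamN {Γ t A} : TJ (MProp.cp A :: Γ) t (MProp.sn A) → TJ Γ (.lam .neg (MProp.cp A) t) (MProp.cn A)
  | appP {Γ t s A} : TJ Γ t (MProp.cp A) → TJ Γ s (MProp.cn A) → TJ Γ (.app .pos t s) (MProp.sp A)
  | appN {Γ t s A} : TJ Γ t (MProp.cn A) → TJ Γ s (MProp.cp A) → TJ Γ (.app .neg t s) (MProp.sn A)

@[simp]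
theorem Sign.flip_flip (sg : Sign) : sg.flip.flip = sg := by
  cases sg <;> rfl

/-- The connective whose proofs of sign `sg` are pairs: `∧` for `+` and `∨` for `-`. Proofs of sign
`sg` of `meet sg.flip A B` are therefore injections. -/
def PureProp.meet : Sign → PureProp → PureProp → PureProp
  | .pos => .conj
  | .neg => .disj

@[simp]
theorem PureProp.meet_inj {sg : Sign} {A B A' B' : PureProp} :
    meet sg A B = meet sg A' B' ↔ A = A' ∧ B = B' := by
  cases sg <;> simp [meet]

namespace MProp

/-- The strong proposition `A⁺` or `A⁻`, as a function of the sign. -/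
def strong : Sign → PureProp → MProp
  | .pos => .sp
  | .neg => .sn

/-- The classical proposition `A⊕` or `A⊖`, as a function of the sign. -/
def classical : Sign → PureProp → MProp
  | .pos => .cp
  | .neg => .cn

@[simp]
theorem strong_inj {sg sg' : Sign} {A B : PureProp} :
    strong sg A = strong sg' B ↔ sg = sg' ∧ A = B := by
  cases sg <;> cases sg' <;> simp [strong]

@[simp]
theorem classical_inj {sg sg' : Sign} {A B : PureProp} :
    classical sg A = classical sg' B ↔ sg = sg' ∧ A = B := by
  cases sg <;> cases sg' <;> simp [classical]

theorem opp_strong (sg : Sign) (A : PureProp) : (strong sg A).opp = strong sg.flip A := by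
  cases sg <;> rfl

theorem isStrong_iff {P : MProp} : P.isStrong ↔ ∃ sg A, P = strong sg A := by
  constructor
  · cases P with
    | sp A => exact fun _ => ⟨.pos, A, rfl⟩
    | sn A => exact fun _ => ⟨.neg, A, rfl⟩
    | cp | cn => exact False.elim
  · rintro ⟨_ | _, A, rfl⟩ <;> trivial

end MProp

namespace TJ

open MProp PureProp

variable {Γ : List MProp} {sg : Sign} {i : Bool} {t s u : Tm} {P Q R : MProp}

theorem var_iff {n : ℕ} : TJ Γ (.var n) P ↔ Γ[n]? = some P :=
  ⟨fun | .var h => h, .var⟩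

theorem abs_iff :
    TJ Γ (.abs Q t s) P ↔ P = Q ∧ ∃ sg A, TJ Γ t (strong sg A) ∧ TJ Γ s (strong sg.flip A) := by
  constructor
  · intro h
    cases h with
    | absT hR ht hs =>
      obtain ⟨sg, A, rfl⟩ := isStrong_iff.mp hR
      exact ⟨rfl, sg, A, ht, opp_strong sg A ▸ hs⟩
  · rintro ⟨rfl, sg, A, ht, hs⟩
    exact .absT (isStrong_iff.mpr ⟨sg, A, rfl⟩) ht (opp_strong sg A ▸ hs)

theorem pair_iff :
    TJ Γ (.pair sg t s) P ↔
      ∃ A B, TJ Γ t (classical sg A) ∧ TJ Γ s (classical sg B) ∧ P = strong sg (meet sg A B) := by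
  constructor
  · rintro ⟨⟩ <;> exact ⟨_, _, ‹_›, ‹_›, rfl⟩
  · cases sg <;> rintro ⟨A, B, ht, hs, rfl⟩
    exacts [.pairP ht hs, .pairN ht hs]

theorem proj_iff :
    TJ Γ (.proj sg i t) P ↔
      ∃ A B, TJ Γ t (strong sg (meet sg A B)) ∧ P = classical sg (cond i B A) := by
  constructor
  · rintro ⟨⟩ <;> exact ⟨_, _, ‹_›, rfl⟩
  · cases sg <;> cases i <;> rintro ⟨A, B, ht, rfl⟩
    exacts [.projP1 ht, .projP2 ht, .projN1 ht, .projN2 ht]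

theorem inj_iff :
    TJ Γ (.inj sg i t) P ↔
      ∃ A B, TJ Γ t (classical sg (cond i B A)) ∧ P = strong sg (meet sg.flip A B) := by
  constructor
  · rintro ⟨⟩ <;> exact ⟨_, _, ‹_›, rfl⟩
  · cases sg <;> cases i <;> rintro ⟨A, B, ht, rfl⟩
    exacts [.injP1 ht, .injP2 ht, .injN1 ht, .injN2 ht]

theorem case_iff :
    TJ Γ (.case sg t Q s R u) P ↔
      ∃ A B, TJ Γ t (strong sg (meet sg.flip A B)) ∧ Q = classical sg A ∧ R = classical sg B ∧
        TJ (Q :: Γ) s P ∧ TJ (R :: Γ) u P := by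
  constructor
  · rintro ⟨⟩ <;> exact ⟨_, _, ‹_›, rfl, rfl, ‹_›, ‹_›⟩
  · cases sg <;> rintro ⟨A, B, ht, rfl, rfl, hs, hu⟩
    exacts [.caseP ht hs hu, .caseN ht hs hu]

theorem negi_iff :
    TJ Γ (.negi sg t) P ↔ ∃ A, TJ Γ t (classical sg.flip A) ∧ P = strong sg (.neg A) := by
  constructor
  · rintro ⟨⟩ <;> exact ⟨_, ‹_›, rfl⟩
  · cases sg <;> rintro ⟨A, ht, rfl⟩
    exacts [.negiP ht, .negiN ht]

theorem nege_iff :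
    TJ Γ (.nege sg t) P ↔ ∃ A, TJ Γ t (strong sg (.neg A)) ∧ P = classical sg.flip A := by
  constructor
  · rintro ⟨⟩ <;> exact ⟨_, ‹_›, rfl⟩
  · cases sg <;> rintro ⟨A, ht, rfl⟩
    exacts [.negeP ht, .negeN ht]

theorem lam_iff :
    TJ Γ (.lam sg Q t) P ↔
      ∃ A, TJ (Q :: Γ) t (strong sg A) ∧ Q = classical sg.flip A ∧ P = classical sg A := by
  constructor
  · rintro ⟨⟩ <;> exact ⟨_, ‹_›, rfl, rfl⟩
  · cases sg <;> rintro ⟨A, ht, rfl, rfl⟩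
    exacts [.lamP ht, .lamN ht]

theorem app_iff :
    TJ Γ (.app sg t s) P ↔
      ∃ A, TJ Γ t (classical sg A) ∧ TJ Γ s (classical sg.flip A) ∧ P = strong sg A := by
  constructor
  · rintro ⟨⟩ <;> exact ⟨_, ‹_›, ‹_›, rfl⟩
  · cases sg <;> rintro ⟨A, ht, hs, rfl⟩
    exacts [.appP ht hs, .appN ht hs]

end TJ

namespace Tm

/-- The set of types of `t` in the context `Γ`, used to state as inclusions that a change of term
and context preserves typing. -/
def types (Γ : List MProp) (t : Tm) : Set MProp :=
  {P | TJ Γ t P}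

section Monotonicity

variable {Γ Γ' : List MProp} {sg : Sign} {i : Bool} {t t' s s' u u' : Tm} {Q R : MProp}

theorem types_abs_mono (ht : t.types Γ ⊆ t'.types Γ') (hs : s.types Γ ⊆ s'.types Γ') :
    (abs Q t s).types Γ ⊆ (abs Q t' s').types Γ' := fun _ h =>
  let ⟨hPQ, sg, A, h₁, h₂⟩ := TJ.abs_iff.mp h
  TJ.abs_iff.mpr ⟨hPQ, sg, A, ht h₁, hs h₂⟩

theorem types_pair_mono (ht : t.types Γ ⊆ t'.types Γ') (hs : s.types Γ ⊆ s'.types Γ') :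
    (pair sg t s).types Γ ⊆ (pair sg t' s').types Γ' := fun _ h =>
  let ⟨A, B, h₁, h₂, hP⟩ := TJ.pair_iff.mp h
  TJ.pair_iff.mpr ⟨A, B, ht h₁, hs h₂, hP⟩

theorem types_proj_mono (ht : t.types Γ ⊆ t'.types Γ') :
    (proj sg i t).types Γ ⊆ (proj sg i t').types Γ' := fun _ h =>
  let ⟨A, B, h₁, hP⟩ := TJ.proj_iff.mp h
  TJ.proj_iff.mpr ⟨A, B, ht h₁, hP⟩

theorem types_inj_mono (ht : t.types Γ ⊆ t'.types Γ') :
    (inj sg i t).types Γ ⊆ (inj sg i t').types Γ' := fun _ h =>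
  let ⟨A, B, h₁, hP⟩ := TJ.inj_iff.mp h
  TJ.inj_iff.mpr ⟨A, B, ht h₁, hP⟩

theorem types_case_mono (ht : t.types Γ ⊆ t'.types Γ')
    (hs : s.types (Q :: Γ) ⊆ s'.types (Q :: Γ')) (hu : u.types (R :: Γ) ⊆ u'.types (R :: Γ')) :
    (case sg t Q s R u).types Γ ⊆ (case sg t' Q s' R u').types Γ' := fun _ h =>
  let ⟨A, B, h₁, hQ, hR, h₂, h₃⟩ := TJ.case_iff.mp h
  TJ.case_iff.mpr ⟨A, B, ht h₁, hQ, hR, hs h₂, hu h₃⟩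

theorem types_negi_mono (ht : t.types Γ ⊆ t'.types Γ') :
    (negi sg t).types Γ ⊆ (negi sg t').types Γ' := fun _ h =>
  let ⟨A, h₁, hP⟩ := TJ.negi_iff.mp h
  TJ.negi_iff.mpr ⟨A, ht h₁, hP⟩

theorem types_nege_mono (ht : t.types Γ ⊆ t'.types Γ') :
    (nege sg t).types Γ ⊆ (nege sg t').types Γ' := fun _ h =>
  let ⟨A, h₁, hP⟩ := TJ.nege_iff.mp h
  TJ.nege_iff.mpr ⟨A, ht h₁, hP⟩

theorem types_lam_mono (ht : t.types (Q :: Γ) ⊆ t'.types (Q :: Γ')) :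
    (lam sg Q t).types Γ ⊆ (lam sg Q t').types Γ' := fun _ h =>
  let ⟨A, h₁, hQ, hP⟩ := TJ.lam_iff.mp h
  TJ.lam_iff.mpr ⟨A, ht h₁, hQ, hP⟩

theorem types_app_mono (ht : t.types Γ ⊆ t'.types Γ') (hs : s.types Γ ⊆ s'.types Γ') :
    (app sg t s).types Γ ⊆ (app sg t' s').types Γ' := fun _ h =>
  let ⟨A, h₁, h₂, hP⟩ := TJ.app_iff.mp h
  TJ.app_iff.mpr ⟨A, ht h₁, hs h₂, hP⟩

end Monotonicity

theorem types_subset_types_shift (Δ Ξ Γ : List MProp) (t : Tm) :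
    t.types (Δ ++ Γ) ⊆ (t.shift Ξ.length Δ.length).types (Δ ++ (Ξ ++ Γ)) := by
  induction t generalizing Δ with
  | var n =>
    intro P h
    replace h : (Δ ++ Γ)[n]? = some P := TJ.var_iff.mp h
    rw [shift]
    split_ifs with hn <;> apply TJ.var
    · rwa [List.getElem?_append_left hn] at h ⊢
    · rw [List.getElem?_append_right (by omega)] at h
      rwa [List.getElem?_append_right (by omega), List.getElem?_append_right (by omega),
        show n + Ξ.length - Δ.length - Ξ.length = n - Δ.length by omega]
  | abs Q t s iht ihs => exact types_abs_mono (iht Δ) (ihs Δ)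
  | pair sg t s iht ihs => exact types_pair_mono (iht Δ) (ihs Δ)
  | proj sg i t ih => exact types_proj_mono (ih Δ)
  | inj sg i t ih => exact types_inj_mono (ih Δ)
  | case sg t Q s R u iht ihs ihu =>
    exact types_case_mono (iht Δ) (ihs (Q :: Δ)) (ihu (R :: Δ))
  | negi sg t ih => exact types_negi_mono (ih Δ)
  | nege sg t ih => exact types_nege_mono (ih Δ)
  | lam sg Q t ih => exact types_lam_mono (ih (Q :: Δ))
  | app sg t s iht ihs => exact types_app_mono (iht Δ) (ihs Δ)

end Tm

theorem TJ.weaken {Γ : List MProp} {t : Tm} {P : MProp} (Q : MProp) (ht : TJ Γ t P) :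
    TJ (Q :: Γ) (t.shift 1 0) P :=
  Tm.types_subset_types_shift [] [Q] Γ t ht

namespace Tm

variable {Γ : List MProp} {s : Tm} {R : MProp}

theorem types_subset_types_subst (Δ : List MProp) (t : Tm) (hs : TJ (Δ ++ Γ) s R) :
    t.types (Δ ++ R :: Γ) ⊆ (t.subst Δ.length s).types (Δ ++ Γ) := by
  induction t generalizing Δ s with
  | var n =>
    intro P h
    replace h : (Δ ++ R :: Γ)[n]? = some P := TJ.var_iff.mp h
    rw [subst]
    split_ifs with hn hlt
    · have hRP : R = P := by simpa [hn] using h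
      exact hRP ▸ hs
    · apply TJ.var
      rw [List.getElem?_append_right (by omega),
        show n - Δ.length = n - 1 - Δ.length + 1 by omega, List.getElem?_cons_succ] at h
      rwa [List.getElem?_append_right (by omega)]
    · apply TJ.var
      rwa [List.getElem?_append_left (by omega)] at h ⊢
  | abs Q t u iht ihu => exact types_abs_mono (iht Δ hs) (ihu Δ hs)
  | pair sg t u iht ihu => exact types_pair_mono (iht Δ hs) (ihu Δ hs)
  | proj sg i t ih => exact types_proj_mono (ih Δ hs)
  | inj sg i t ih => exact types_inj_mono (ih Δ hs)
  | case sg t P u Q v iht ihu ihv =>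
    exact types_case_mono (iht Δ hs) (ihu (P :: Δ) (hs.weaken P)) (ihv (Q :: Δ) (hs.weaken Q))
  | negi sg t ih => exact types_negi_mono (ih Δ hs)
  | nege sg t ih => exact types_nege_mono (ih Δ hs)
  | lam sg P t ih => exact types_lam_mono (ih (P :: Δ) (hs.weaken P))
  | app sg t u iht ihu => exact types_app_mono (iht Δ hs) (ihu Δ hs)

end Tm

namespace TJ

open MProp

variable {Γ : List MProp} {sg : Sign} {i : Bool} {t t₁ t₂ s s₁ s₂ : Tm} {P Q R : MProp}

theorem subst_zero (ht : TJ (R :: Γ) t P) (hs : TJ Γ s R) : TJ Γ (t.subst 0 s) P :=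
  Tm.types_subset_types_subst [] t hs ht

theorem absE_of_classical {A : PureProp} (ht : TJ Γ t (classical sg A))
    (hs : TJ Γ s (classical sg.flip A)) : TJ Γ (absE Q sg t s) Q :=
  abs_iff.mpr ⟨rfl, sg, A, app_iff.mpr ⟨A, ht, hs, rfl⟩,
    app_iff.mpr ⟨A, hs, sg.flip_flip.symm ▸ ht, rfl⟩⟩

theorem classical_cond {A B : PureProp} (h₁ : TJ Γ t₁ (classical sg A))
    (h₂ : TJ Γ t₂ (classical sg B)) : TJ Γ (cond i t₂ t₁) (classical sg (cond i B A)) := by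
  cases i
  exacts [h₁, h₂]

theorem of_proj_pair (h : TJ Γ (.proj sg i (.pair sg t₁ t₂)) P) : TJ Γ (cond i t₂ t₁) P := by
  obtain ⟨A, B, hpair, rfl⟩ := proj_iff.mp h
  obtain ⟨h₁, h₂⟩ : TJ Γ t₁ (classical sg A) ∧ TJ Γ t₂ (classical sg B) := by
    simpa [pair_iff] using hpair
  exact classical_cond h₁ h₂

theorem of_case_inj (h : TJ Γ (.case sg (.inj sg i t) Q s₁ R s₂) P) :
    TJ Γ ((cond i s₂ s₁).subst 0 t) P := by
  obtain ⟨A, B, hinj, rfl, rfl, h₁, h₂⟩ := case_iff.mp h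
  have ht : TJ Γ t (classical sg (cond i B A)) := by simpa [inj_iff] using hinj
  cases i
  exacts [h₁.subst_zero ht, h₂.subst_zero ht]

theorem of_nege_negi (h : TJ Γ (.nege sg (.negi sg t)) P) : TJ Γ t P := by
  obtain ⟨A, hnegi, rfl⟩ := nege_iff.mp h
  simpa [negi_iff] using hnegi

theorem of_app_lam (h : TJ Γ (.app sg (.lam sg Q t) s) P) : TJ Γ (t.subst 0 s) P := by
  obtain ⟨A, hlam, hs, rfl⟩ := app_iff.mp h
  obtain ⟨ht, rfl⟩ : TJ (Q :: Γ) t (strong sg A) ∧ Q = classical sg.flip A := by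
    simpa [lam_iff] using hlam
  exact ht.subst_zero hs

theorem of_abs_pair_inj (h : TJ Γ (.abs Q (.pair sg t₁ t₂) (.inj sg.flip i s)) P) :
    TJ Γ (absE Q sg (cond i t₂ t₁) s) P := by
  obtain ⟨rfl, sg', C, hpair, hinj⟩ := abs_iff.mp h
  obtain ⟨A, B, h₁, h₂, hC⟩ := pair_iff.mp hpair
  obtain ⟨rfl, rfl⟩ := strong_inj.mp hC
  have hs : TJ Γ s (classical sg'.flip (cond i B A)) := by simpa [inj_iff] using hinj
  exact absE_of_classical (classical_cond h₁ h₂) hs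

theorem of_abs_inj_pair (h : TJ Γ (.abs Q (.inj sg i t) (.pair sg.flip s₁ s₂)) P) :
    TJ Γ (absE Q sg t (cond i s₂ s₁)) P := by
  obtain ⟨rfl, sg', C, hinj, hpair⟩ := abs_iff.mp h
  obtain ⟨A, B, ht, hC⟩ := inj_iff.mp hinj
  obtain ⟨rfl, rfl⟩ := strong_inj.mp hC
  obtain ⟨h₁, h₂⟩ : TJ Γ s₁ (classical sg'.flip A) ∧ TJ Γ s₂ (classical sg'.flip B) := by
    simpa [pair_iff] using hpair
  exact absE_of_classical ht (classical_cond h₁ h₂)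

theorem of_abs_negi_negi (h : TJ Γ (.abs Q (.negi sg t) (.negi sg.flip s)) P) :
    TJ Γ (absE Q sg.flip t s) P := by
  obtain ⟨rfl, sg', C, hnegi, hnegi'⟩ := abs_iff.mp h
  obtain ⟨A, ht, hC⟩ := negi_iff.mp hnegi
  obtain ⟨rfl, rfl⟩ := strong_inj.mp hC
  have hs : TJ Γ s (classical sg'.flip.flip A) := by simpa [negi_iff] using hnegi'
  exact absE_of_classical ht hs

end TJ

/-- Subject reduction for λPRK. -/
theorem subject_reduction {Γ : List MProp} {t s : Tm} {P : MProp}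
    (ht : TJ Γ t P) (hr : Red t s) : TJ Γ s P := by
  suffices t.types Γ ⊆ s.types Γ from this ht
  clear ht
  induction hr generalizing Γ with
  | proj1 | proj2 => exact fun _ h => h.of_proj_pair
  | case1 | case2 => exact fun _ h => h.of_case_inj
  | negRed => exact fun _ h => h.of_nege_negi
  | beta => exact fun _ h => h.of_app_lam
  | absPairInj1 | absPairInj2 => exact fun _ h => h.of_abs_pair_inj
  | absInjPair1 | absInjPair2 => exact fun _ h => h.of_abs_inj_pair
  | absNeg => exact fun _ h => h.of_abs_negi_negi
  | absCL _ ih => exact Tm.types_abs_mono ih .rfl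
  | absCR _ ih => exact Tm.types_abs_mono .rfl ih
  | pairCL _ ih => exact Tm.types_pair_mono ih .rfl
  | pairCR _ ih => exact Tm.types_pair_mono .rfl ih
  | projC _ ih => exact Tm.types_proj_mono ih
  | injC _ ih => exact Tm.types_inj_mono ih
  | caseC1 _ ih => exact Tm.types_case_mono ih .rfl .rfl
  | caseC2 _ ih => exact Tm.types_case_mono .rfl ih .rfl
  | caseC3 _ ih => exact Tm.types_case_mono .rfl .rfl ih
  | negiC _ ih => exact Tm.types_negi_mono ih
  | negeC _ ih => exact Tm.types_nege_mono ih
  | lamC _ ih => exact Tm.types_lam_mono ih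
  | appCL _ ih => exact Tm.types_app_mono ih .rfl
  | appCR _ ih => exact Tm.types_app_mono .rfl ih
end

section
/- Confluence of λPRK: the reduction relation → of λPRK is confluent, i.e., if t →* t₁ and t →* t₂ then there exists t₃ with t₁ →* t₃ and t₂ →* t₃. -/
/-!
Confluence by parallel reduction, in the superdevelopment style of Aczel. A parallel step `Par`
reduces all immediate subterms in parallel and then may contract the root of the *result*, so that
redexes created by reductions below may be contracted as well. Contracting the root whenever
possible defines a map `Tm.dev` with the triangle property: if `Par t u` then `Par u t.dev`. This
works because a term former that makes up a redex (pairing, injection, abstraction, negation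
introduction) is never a redex itself, hence survives parallel steps and the redex with it. So `Par`
has the diamond property, and it has the same reflexive transitive closure as `Red`.
-/

open Relation

/-! ### Shifting and substitution -/

namespace Tm

theorem shift_shift (t : Tm) {c e : ℕ} (d d' : ℕ) (h : c ≤ e) :
    shift d c (shift d' e t) = shift d' (e + d) (shift d c t) := by
  induction t generalizing c e with
  | var k => simp only [shift]; grind [shift]
  | _ => simp only [shift]; grind

theorem shift_subst_of_le (t s : Tm) {c j : ℕ} (d : ℕ) (h : j ≤ c) :
    shift d c (subst t j s) = subst (shift d (c + 1) t) j (shift d c s) := by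
  induction t generalizing c j s with
  | var k => simp only [shift, subst]; grind [shift, subst]
  | _ => simp only [shift, subst]; grind [shift_shift]

theorem shift_subst_of_ge (t s : Tm) {c j : ℕ} (d : ℕ) (h : c ≤ j) :
    shift d c (subst t j s) = subst (shift d c t) (j + d) (shift d c s) := by
  induction t generalizing c j s with
  | var k => simp only [shift, subst]; grind [shift, subst]
  | _ => simp only [shift, subst]; grind [shift_shift]

theorem subst_shift_one_self (t s : Tm) (j : ℕ) : subst (shift 1 j t) j s = t := by
  induction t generalizing j s with
  | var k => simp only [shift]; grind [subst]
  | _ => simp only [shift, subst]; grind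

theorem subst_subst (t s u : Tm) {i j : ℕ} (h : i ≤ j) :
    subst (subst t i s) j u = subst (subst t (j + 1) (shift 1 i u)) i (subst s j u) := by
  induction t generalizing i j s u with
  | var k => simp only [subst]; grind [subst, subst_shift_one_self]
  | _ => simp only [subst]; grind [shift_shift, shift_subst_of_ge]

end Tm

/-! ### Root contraction -/

/-- Contraction of a redex at the root of a term. Rules of `Red` that differ only in the selected
component are merged, the component being given by a Boolean `b`. -/
inductive RootRed : Tm → Tm → Prop
  | proj {sg b t s} : RootRed (.proj sg b (.pair sg t s)) (bif b then s else t)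
  | case {sg b t P s Q u} :
      RootRed (.case sg (.inj sg b t) P s Q u) (Tm.subst (bif b then u else s) 0 t)
  | nege {sg t} : RootRed (.nege sg (.negi sg t)) t
  | beta {sg P t s} : RootRed (.app sg (.lam sg P t) s) (Tm.subst t 0 s)
  | absPairInj {Q sg b t s u} :
      RootRed (.abs Q (.pair sg t s) (.inj sg.flip b u)) (absE Q sg (bif b then s else t) u)
  | absInjPair {Q sg b t s u} :
      RootRed (.abs Q (.inj sg b u) (.pair sg.flip t s)) (absE Q sg u (bif b then s else t))
  | absNegi {Q sg t s} : RootRed (.abs Q (.negi sg t) (.negi sg.flip s)) (absE Q sg.flip t s)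

/-- The result of contracting the redex at the root of a term, or the term itself if there is no
such redex. -/
def Tm.contract : Tm → Tm
  | t@(.proj sg b (.pair sg' u v)) => if sg' = sg then bif b then v else u else t
  | t@(.case sg (.inj sg' b u) _ v _ w) =>
      if sg' = sg then Tm.subst (bif b then w else v) 0 u else t
  | t@(.nege sg (.negi sg' u)) => if sg' = sg then u else t
  | t@(.app sg (.lam sg' _ u) v) => if sg' = sg then Tm.subst u 0 v else t
  | t@(.abs Q (.pair sg u v) (.inj sg' b w)) =>
      if sg' = sg.flip then absE Q sg (bif b then v else u) w else t
  | t@(.abs Q (.inj sg b w) (.pair sg' u v)) =>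
      if sg' = sg.flip then absE Q sg w (bif b then v else u) else t
  | t@(.abs Q (.negi sg u) (.negi sg' v)) => if sg' = sg.flip then absE Q sg.flip u v else t
  | t => t

namespace RootRed

theorem reflGen_contract (t : Tm) : ReflGen RootRed t t.contract := by
  unfold Tm.contract
  split <;> try split_ifs with h
  all_goals first | exact .refl | (subst h; exact .single (by constructor))

theorem red {t u : Tm} (h : RootRed t u) : Red t u := by
  cases h with
  | @proj _ b | @case _ b | @absPairInj _ _ b | @absInjPair _ _ b => cases b <;> constructor
  | nege | beta | absNegi => constructor

theorem shift {t u : Tm} (h : RootRed t u) (d c : ℕ) : RootRed (t.shift d c) (u.shift d c) := by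
  cases h with
  | case =>
    rw [Tm.shift_subst_of_le _ _ _ c.zero_le, Bool.apply_cond (Tm.shift d (c + 1))]
    exact .case
  | beta =>
    rw [Tm.shift_subst_of_le _ _ _ c.zero_le]
    exact .beta
  | _ =>
    simp only [absE, Tm.shift, Bool.apply_cond (Tm.shift d c)]
    constructor

theorem subst {t u : Tm} (h : RootRed t u) (j : ℕ) (s : Tm) :
    RootRed (t.subst j s) (u.subst j s) := by
  cases h with
  | case =>
    rw [Tm.subst_subst _ _ _ j.zero_le, Bool.apply_cond (Tm.subst · (j + 1) (s.shift 1 0))]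
    exact .case
  | beta =>
    rw [Tm.subst_subst _ _ _ j.zero_le]
    exact .beta
  | _ =>
    simp only [absE, Tm.subst, Bool.apply_cond (Tm.subst · j s)]
    constructor

end RootRed

/-! ### Parallel reduction -/

/-- Parallel reduction: the immediate subterms are reduced in parallel, and the root of the
resulting term may then be contracted. Only eliminators and `abs` can head a redex, so only their
rules provide for a contraction. -/
inductive Par : Tm → Tm → Prop
  | var {k} : Par (.var k) (.var k)
  | abs {Q t t' s s' r} : Par t t' → Par s s' → ReflGen RootRed (.abs Q t' s') r →
      Par (.abs Q t s) r
  | pair {sg t t' s s'} : Par t t' → Par s s' → Par (.pair sg t s) (.pair sg t' s')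
  | proj {sg b t t' r} : Par t t' → ReflGen RootRed (.proj sg b t') r → Par (.proj sg b t) r
  | inj {sg b t t'} : Par t t' → Par (.inj sg b t) (.inj sg b t')
  | case {sg t t' P s s' Q u u' r} : Par t t' → Par s s' → Par u u' →
      ReflGen RootRed (.case sg t' P s' Q u') r → Par (.case sg t P s Q u) r
  | negi {sg t t'} : Par t t' → Par (.negi sg t) (.negi sg t')
  | nege {sg t t' r} : Par t t' → ReflGen RootRed (.nege sg t') r → Par (.nege sg t) r
  | lam {sg P t t'} : Par t t' → Par (.lam sg P t) (.lam sg P t')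
  | app {sg t t' s s' r} : Par t t' → Par s s' → ReflGen RootRed (.app sg t' s') r →
      Par (.app sg t s) r

/-- The complete superdevelopment of a term: contract the root, whenever possible, after developing
the immediate subterms. -/
def Tm.dev : Tm → Tm
  | .var k => .var k
  | .abs Q t s => contract (.abs Q t.dev s.dev)
  | .pair sg t s => .pair sg t.dev s.dev
  | .proj sg b t => contract (.proj sg b t.dev)
  | .inj sg b t => .inj sg b t.dev
  | .case sg t P s Q u => contract (.case sg t.dev P s.dev Q u.dev)
  | .negi sg t => .negi sg t.dev
  | .nege sg t => contract (.nege sg t.dev)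
  | .lam sg P t => .lam sg P t.dev
  | .app sg t s => contract (.app sg t.dev s.dev)

namespace Par

variable {P Q : MProp} {sg : Sign} {b : Bool} {t t' s s' u u' r : Tm}

theorem refl (t : Tm) : Par t t := by
  induction t <;> constructor <;> first | assumption | exact .refl

theorem shift (h : Par t t') (d c : ℕ) : Par (t.shift d c) (t'.shift d c) := by
  have root {t u : Tm} (c : ℕ) : ReflGen RootRed t u → ReflGen RootRed (t.shift d c) (u.shift d c)
    | .refl => .refl
    | .single h => .single (h.shift d c)
  induction h generalizing c with
  | var => exact refl _
  | abs _ _ hr iht ihs => exact .abs (iht c) (ihs c) (root c hr)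
  | pair _ _ iht ihs => exact .pair (iht c) (ihs c)
  | proj _ hr ih => exact .proj (ih c) (root c hr)
  | inj _ ih => exact .inj (ih c)
  | case _ _ _ hr iht ihs ihu => exact .case (iht c) (ihs (c + 1)) (ihu (c + 1)) (root c hr)
  | negi _ ih => exact .negi (ih c)
  | nege _ hr ih => exact .nege (ih c) (root c hr)
  | lam _ ih => exact .lam (ih (c + 1))
  | app _ _ hr iht ihs => exact .app (iht c) (ihs c) (root c hr)

theorem subst (h : Par t t') (j : ℕ) (hs : Par s s') : Par (t.subst j s) (t'.subst j s') := by
  have root {t u : Tm} (j : ℕ) (s : Tm) :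
      ReflGen RootRed t u → ReflGen RootRed (t.subst j s) (u.subst j s)
    | .refl => .refl
    | .single h => .single (h.subst j s)
  induction h generalizing j s s' with
  | var =>
    simp only [Tm.subst]
    split_ifs
    exacts [hs, .var, .var]
  | abs _ _ hr iht ihu => exact .abs (iht j hs) (ihu j hs) (root j s' hr)
  | pair _ _ iht ihu => exact .pair (iht j hs) (ihu j hs)
  | proj _ hr ih => exact .proj (ih j hs) (root j s' hr)
  | inj _ ih => exact .inj (ih j hs)
  | case _ _ _ hr iht ihu ihv =>
    have hs' := hs.shift 1 0
    exact .case (iht j hs) (ihu (j + 1) hs') (ihv (j + 1) hs') (root j s' hr)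
  | negi _ ih => exact .negi (ih j hs)
  | nege _ hr ih => exact .nege (ih j hs) (root j s' hr)
  | lam _ ih => exact .lam (ih (j + 1) (hs.shift 1 0))
  | app _ _ hr iht ihu => exact .app (iht j hs) (ihu j hs) (root j s' hr)

theorem cond (b : Bool) (ht : Par t t') (hs : Par s s') :
    Par (bif b then s else t) (bif b then s' else t') := by
  cases b <;> assumption

theorem absE (Q : MProp) (sg : Sign) (ht : Par t t') (hs : Par s s') :
    Par (absE Q sg t s) (absE Q sg t' s') :=
  .abs (.app ht hs .refl) (.app hs ht .refl) .refl

/-! ### The triangle property -/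

theorem contract_proj (hr : ReflGen RootRed (.proj sg b t) r) (ht : Par t t') :
    Par r (Tm.contract (.proj sg b t')) := by
  rcases hr with _ | ⟨⟨⟩⟩
  · exact .proj ht (RootRed.reflGen_contract _)
  · cases ht with | pair ht hs => simpa [Tm.contract] using cond b ht hs

theorem contract_case (hr : ReflGen RootRed (.case sg t P s Q u) r) (ht : Par t t')
    (hs : Par s s') (hu : Par u u') :
    Par r (Tm.contract (.case sg t' P s' Q u')) := by
  rcases hr with _ | ⟨⟨⟩⟩
  · exact .case ht hs hu (RootRed.reflGen_contract _)
  · cases ht with | inj ht => simpa [Tm.contract] using (cond _ hs hu).subst 0 ht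

theorem contract_nege (hr : ReflGen RootRed (.nege sg t) r) (ht : Par t t') :
    Par r (Tm.contract (.nege sg t')) := by
  rcases hr with _ | ⟨⟨⟩⟩
  · exact .nege ht (RootRed.reflGen_contract _)
  · cases ht with | negi ht => simpa [Tm.contract] using ht

theorem contract_app (hr : ReflGen RootRed (.app sg t s) r) (ht : Par t t')
    (hs : Par s s') : Par r (Tm.contract (.app sg t' s')) := by
  rcases hr with _ | ⟨⟨⟩⟩
  · exact .app ht hs (RootRed.reflGen_contract _)
  · cases ht with | lam ht => simpa [Tm.contract] using ht.subst 0 hs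

theorem contract_abs (hr : ReflGen RootRed (.abs Q t s) r) (ht : Par t t')
    (hs : Par s s') : Par r (Tm.contract (.abs Q t' s')) := by
  rcases hr with _ | hr
  · exact .abs ht hs (RootRed.reflGen_contract _)
  cases hr with
  | @absPairInj _ sg b =>
    cases ht with | pair ht₁ ht₂ => cases hs with | inj hs =>
    simpa [Tm.contract] using absE Q sg (cond b ht₁ ht₂) hs
  | @absInjPair _ sg b =>
    cases ht with | inj ht => cases hs with | pair hs₁ hs₂ =>
    simpa [Tm.contract] using absE Q sg ht (cond b hs₁ hs₂)
  | @absNegi _ sg =>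
    cases ht with | negi ht => cases hs with | negi hs =>
    simpa [Tm.contract] using absE Q sg.flip ht hs

theorem triangle (h : Par t u) : Par u t.dev := by
  induction h with
  | var => exact .var
  | abs _ _ hr iht ihs => exact contract_abs hr iht ihs
  | pair _ _ iht ihs => exact .pair iht ihs
  | proj _ hr ih => exact contract_proj hr ih
  | inj _ ih => exact .inj ih
  | case _ _ _ hr iht ihs ihu => exact contract_case hr iht ihs ihu
  | negi _ ih => exact .negi ih
  | nege _ hr ih => exact contract_nege hr ih
  | lam _ ih => exact .lam ih
  | app _ _ hr iht ihs => exact contract_app hr iht ihs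

end Par

/-! ### Comparison with one-step reduction -/

theorem RootRed.par {t u : Tm} (h : RootRed t u) : Par t u := by
  cases h <;> constructor <;> first | exact Par.refl _ | exact .single (by constructor)

theorem Red.par {t u : Tm} (h : Red t u) : Par t u := by
  induction h with
  | proj1 => exact (RootRed.proj (b := false)).par
  | proj2 => exact (RootRed.proj (b := true)).par
  | case1 => exact (RootRed.case (b := false)).par
  | case2 => exact (RootRed.case (b := true)).par
  | negRed => exact RootRed.nege.par
  | beta => exact RootRed.beta.par
  | absPairInj1 => exact (RootRed.absPairInj (b := false)).par
  | absPairInj2 => exact (RootRed.absPairInj (b := true)).par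
  | absInjPair1 => exact (RootRed.absInjPair (b := false)).par
  | absInjPair2 => exact (RootRed.absInjPair (b := true)).par
  | absNeg => exact RootRed.absNegi.par
  | _ => constructor <;> first | assumption | exact Par.refl _ | exact .refl

namespace RedStar

variable {P Q : MProp} {sg : Sign} {b : Bool} {t t' s s' u u' : Tm}

theorem abs (ht : RedStar t t') (hs : RedStar s s') :
    RedStar (.abs Q t s) (.abs Q t' s') :=
  (ht.lift (Tm.abs Q · s) fun _ _ => Red.absCL).trans
    (hs.lift (Tm.abs Q t') fun _ _ => Red.absCR)

theorem pair (ht : RedStar t t') (hs : RedStar s s') :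
    RedStar (.pair sg t s) (.pair sg t' s') :=
  (ht.lift (Tm.pair sg · s) fun _ _ => Red.pairCL).trans
    (hs.lift (Tm.pair sg t') fun _ _ => Red.pairCR)

theorem proj (ht : RedStar t t') : RedStar (.proj sg b t) (.proj sg b t') :=
  ht.lift (Tm.proj sg b) fun _ _ => Red.projC

theorem inj (ht : RedStar t t') : RedStar (.inj sg b t) (.inj sg b t') :=
  ht.lift (Tm.inj sg b) fun _ _ => Red.injC

theorem case (ht : RedStar t t') (hs : RedStar s s') (hu : RedStar u u') :
    RedStar (.case sg t P s Q u) (.case sg t' P s' Q u') :=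
  ((ht.lift (Tm.case sg · P s Q u) fun _ _ => Red.caseC1).trans
    (hs.lift (Tm.case sg t' P · Q u) fun _ _ => Red.caseC2)).trans
    (hu.lift (Tm.case sg t' P s' Q) fun _ _ => Red.caseC3)

theorem negi (ht : RedStar t t') : RedStar (.negi sg t) (.negi sg t') :=
  ht.lift (Tm.negi sg) fun _ _ => Red.negiC

theorem nege (ht : RedStar t t') : RedStar (.nege sg t) (.nege sg t') :=
  ht.lift (Tm.nege sg) fun _ _ => Red.negeC

theorem lam (ht : RedStar t t') : RedStar (.lam sg P t) (.lam sg P t') :=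
  ht.lift (Tm.lam sg P) fun _ _ => Red.lamC

theorem app (ht : RedStar t t') (hs : RedStar s s') :
    RedStar (.app sg t s) (.app sg t' s') :=
  (ht.lift (Tm.app sg · s) fun _ _ => Red.appCL).trans
    (hs.lift (Tm.app sg t') fun _ _ => Red.appCR)

end RedStar

theorem Par.redStar {t u : Tm} (h : Par t u) : RedStar t u := by
  have root {t u : Tm} (h : ReflGen RootRed t u) : RedStar t u :=
    (h.mono fun _ _ => RootRed.red).to_reflTransGen
  induction h with
  | var => exact .refl
  | abs _ _ hr iht ihs => exact (RedStar.abs iht ihs).trans (root hr)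
  | pair _ _ iht ihs => exact .pair iht ihs
  | proj _ hr ih => exact (RedStar.proj ih).trans (root hr)
  | inj _ ih => exact .inj ih
  | case _ _ _ hr iht ihs ihu => exact (RedStar.case iht ihs ihu).trans (root hr)
  | negi _ ih => exact .negi ih
  | nege _ hr ih => exact (RedStar.nege ih).trans (root hr)
  | lam _ ih => exact .lam ih
  | app _ _ hr iht ihs => exact (RedStar.app iht ihs).trans (root hr)

theorem redStar_eq_reflTransGen_par : RedStar = ReflTransGen Par :=
  le_antisymm (ReflTransGen.mono fun _ _ => Red.par) (reflTransGen_closed fun _ _ => Par.redStar)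

/-- Confluence of λPRK. -/
theorem lambdaPRK_confluent (t t1 t2 : Tm)
    (h1 : RedStar t t1) (h2 : RedStar t t2) :
    ∃ t3, RedStar t1 t3 ∧ RedStar t2 t3 := by
  rw [redStar_eq_reflTransGen_par] at h1 h2 ⊢
  exact church_rosser
    (fun a _ _ hb hc => ⟨a.dev, .single hb.triangle, .single hc.triangle⟩) h1 h2
end
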